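/- arXiv:0901.4232 — 5 statements merged into one kernel-verified Lean document; each statement's English description precedes it below -/
import Mathlib

section
/- Let E be a real interval (of any kind, with nonempty interior) and n ≥ 2. A function M : Eⁿ → E is symmetric, continuous, strictly increasing in each variable, idempotent (M(x,…,x)=x for all x∈E), and bisymmetric if and only if there exists a continuous strictly monotonic function f : E → ℝ such that M(x₁,…,xₙ) = f⁻¹( (1/n) ∑_{i=1}^n f(xᵢ) ) for all x ∈ Eⁿ. -/
/-!
If `f (M x) = (1/n) ∑ f (x i)`, the five properties of `M` are read off through the injective `f`;
for continuity, order-connectedness of `E` turns continuity of `f ∘ M` into continuity of `M`.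

Conversely, fix an interior point `a` of `E` and two coordinates, and put
`p x y = M (x, y, a, …, a)` and `φ x = p x a`. For the generator sought, normalised by `f a = 0`,
the map `φ` is division by `n` and `p x y` stands for `(x + y) / n`. Undoing the division formally,
let `Lim` be the direct limit of `E → E → E → …` along `φ`: its elements are classes
`ι m x`, meaning `nᵐ x`, with `ι (m + 1) (φ x) = ι m x`, and they are added by
`ι m x + ι m y = ι (m + 1) (p x y)`. Bisymmetry and symmetry of `M` make this a well-defined
commutative and associative operation, and monotonicity makes it compatible with the order. Negatives
exist since the iterates of `φ` tend to `a` (`BisymmMean.tendsto_iterate`), so that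
`p (φᵐ x) y = a` is solvable in `y` for large `m` by the intermediate value theorem.

Bisymmetry also gives `ι (m + 1) (M x) = ∑ ι m (x l)` (`BisymmMean.ι_M`), and then
`ι (m + 1) x = n • ι m x` by idempotence. With `φᵐ x → a` this shows that `Lim` is Archimedean,
so by Hölder's theorem it embeds into `ℝ`; the restriction `f` of such an embedding to level `0` is
strictly increasing and satisfies `n f (M x) = ∑ f (x l)`. Continuity of `f` is automatic: for
`y ≠ c`, the iterates of `x ↦ M (x, c, …, c)` at `y` stay strictly on the same side of `c`, while
their `f`-values converge geometrically to `f c`.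
-/

/-! ### The ordered group attached to a medial operation -/

/-- A commutative, medial, strictly increasing binary operation `p` with an idempotent point `a`,
such that every `x`, after enough applications of `x ↦ p x a`, has a partner `y` with value `a`
under `p`. The model is `p x y = (x + y) / n` on an interval around `a = 0`. -/
structure MedialOp (X : Type) [LinearOrder X] where
  p : X → X → X
  a : X
  comm : ∀ x y, p x y = p y x
  medial : ∀ x y z w, p (p x y) (p z w) = p (p x z) (p y w)
  mono : ∀ y, StrictMono (fun x => p x y)
  idem : p a a = a
  neg : ∀ x, ∃ m y, p ((fun x => p x a)^[m] x) y = a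

namespace MedialOp

variable {X : Type} [LinearOrder X] (S : MedialOp X)

/-- The map `x ↦ p x a`, which plays the role of division by `n`. -/
def φ (x : X) : X := S.p x S.a

lemma φ_strictMono : StrictMono S.φ := S.mono S.a

lemma φ_iter_strictMono (m : ℕ) : StrictMono (S.φ^[m]) := S.φ_strictMono.iterate m

lemma φ_iter_comm (m k : ℕ) (x : X) : S.φ^[m] (S.φ^[k] x) = S.φ^[k] (S.φ^[m] x) := by
  rw [← Function.iterate_add_apply, ← Function.iterate_add_apply, add_comm]

lemma φ_iter_a (m : ℕ) : S.φ^[m] S.a = S.a :=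
  Function.iterate_fixed (f := S.φ) S.idem m

lemma φ_p (x y : X) : S.φ (S.p x y) = S.p (S.φ x) (S.φ y) := by
  have := S.medial x y S.a S.a
  rwa [S.idem] at this

lemma φ_iter_p (m : ℕ) (x y : X) :
    S.φ^[m] (S.p x y) = S.p (S.φ^[m] x) (S.φ^[m] y) := by
  induction m generalizing x y with
  | zero => rfl
  | succ m ih => simp only [Function.iterate_succ_apply, φ_p, ih]

/-- `(m, x)` stands for the element `x` of the `m`-th copy of `X` in `X → X → X → …` along `φ`;
since `φ` is injective, two such pairs agree in the limit iff they agree at level `m + k`. -/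
def setoid : Setoid (ℕ × X) where
  r u v := S.φ^[v.1] u.2 = S.φ^[u.1] v.2
  iseqv :=
    { refl := fun _ => rfl
      symm := fun h => h.symm
      trans := by
        rintro ⟨m, x⟩ ⟨k, y⟩ ⟨l, z⟩ h1 h2
        simp only at h1 h2 ⊢
        apply (S.φ_iter_strictMono k).injective
        rw [S.φ_iter_comm k l, h1, S.φ_iter_comm l m, h2, S.φ_iter_comm m k] }

/-- The direct limit of `X → X → X → …` along `φ`. -/
def Lim : Type := Quotient S.setoid

/-- The inclusion of the `m`-th copy of `X` in the direct limit. -/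
def ι (m : ℕ) (x : X) : S.Lim := Quotient.mk S.setoid (m, x)

lemma ι_eq_iff {m k : ℕ} {x y : X} : S.ι m x = S.ι k y ↔ S.φ^[k] x = S.φ^[m] y :=
  Quotient.eq (r := S.setoid)

lemma ι_shift (m j : ℕ) (x : X) : S.ι (m + j) (S.φ^[j] x) = S.ι m x := by
  rw [ι_eq_iff, ← Function.iterate_add_apply]

lemma ι_φ (m : ℕ) (x : X) : S.ι (m + 1) (S.φ x) = S.ι m x := S.ι_shift m 1 x

lemma exists_level (g : S.Lim) : ∃ m, ∀ k, m ≤ k → ∃ x, g = S.ι k x := by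
  induction g using Quotient.inductionOn with
  | h u =>
    refine ⟨u.1, fun k hk => ⟨S.φ^[k - u.1] u.2, ?_⟩⟩
    have := S.ι_shift u.1 (k - u.1) u.2
    rw [Nat.add_sub_cancel' hk] at this
    exact this.symm

lemma exists_common₃ (g h l : S.Lim) :
    ∃ m x y z, g = S.ι m x ∧ h = S.ι m y ∧ l = S.ι m z := by
  obtain ⟨m₁, h₁⟩ := S.exists_level g
  obtain ⟨m₂, h₂⟩ := S.exists_level h
  obtain ⟨m₃, h₃⟩ := S.exists_level l
  obtain ⟨x, hx⟩ := h₁ (m₁ + m₂ + m₃) (by omega)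
  obtain ⟨y, hy⟩ := h₂ (m₁ + m₂ + m₃) (by omega)
  obtain ⟨z, hz⟩ := h₃ (m₁ + m₂ + m₃) (by omega)
  exact ⟨_, x, y, z, hx, hy, hz⟩

lemma exists_common (g h : S.Lim) : ∃ m x y, g = S.ι m x ∧ h = S.ι m y := by
  obtain ⟨m, x, y, -, hx, hy, -⟩ := S.exists_common₃ g h h
  exact ⟨m, x, y, hx, hy⟩

/-- Both summands are moved to a common level; `ι_add` shows that the choice is immaterial. -/
noncomputable instance : Add S.Lim where
  add g h := S.ι ((S.exists_common g h).choose + 1)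
    (S.p (S.exists_common g h).choose_spec.choose
      (S.exists_common g h).choose_spec.choose_spec.choose)

lemma ι_add (m : ℕ) (x y : X) : S.ι m x + S.ι m y = S.ι (m + 1) (S.p x y) := by
  obtain ⟨h1, h2⟩ :=
    (S.exists_common (S.ι m x) (S.ι m y)).choose_spec.choose_spec.choose_spec
  change S.ι (_ + 1) (S.p _ _) = _
  rw [ι_eq_iff] at h1 h2 ⊢
  rw [Function.iterate_succ_apply', Function.iterate_succ_apply', φ_iter_p, φ_iter_p, h1, h2]

instance : Zero S.Lim := ⟨S.ι 0 S.a⟩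

lemma ι_a (m : ℕ) : S.ι m S.a = 0 := by
  change _ = S.ι 0 S.a
  rw [ι_eq_iff, φ_iter_a, φ_iter_a]

instance : LE S.Lim where
  le g h := ∃ m x y, g = S.ι m x ∧ h = S.ι m y ∧ x ≤ y

lemma ι_le_iff {m : ℕ} {x y : X} : S.ι m x ≤ S.ι m y ↔ x ≤ y := by
  constructor
  · rintro ⟨k, x', y', hx, hy, h⟩
    rw [ι_eq_iff] at hx hy
    rw [← (S.φ_iter_strictMono k).le_iff_le, hx, hy]
    exact (S.φ_iter_strictMono m).monotone h
  · exact fun h => ⟨m, x, y, rfl, rfl, h⟩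

lemma ι_inj {m : ℕ} {x y : X} : S.ι m x = S.ι m y ↔ x = y := by
  rw [ι_eq_iff]
  exact (S.φ_iter_strictMono m).injective.eq_iff

noncomputable instance : LinearOrder S.Lim where
  le_refl g := by
    obtain ⟨m, x, -, rfl, -⟩ := S.exists_common g g
    exact S.ι_le_iff.2 le_rfl
  le_trans g h l := by
    obtain ⟨m, x, y, z, rfl, rfl, rfl⟩ := S.exists_common₃ g h l
    simp only [ι_le_iff]
    exact le_trans
  le_antisymm g h := by
    obtain ⟨m, x, y, rfl, rfl⟩ := S.exists_common g h
    simp only [ι_le_iff, ι_inj]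
    exact le_antisymm
  le_total g h := by
    obtain ⟨m, x, y, rfl, rfl⟩ := S.exists_common g h
    simp only [ι_le_iff]
    exact le_total x y
  toDecidableLE := Classical.decRel _

lemma ι_strictMono (m : ℕ) : StrictMono (S.ι m) :=
  strictMono_of_le_iff_le fun _ _ => S.ι_le_iff.symm

lemma lim_add_comm (g h : S.Lim) : g + h = h + g := by
  obtain ⟨m, x, y, rfl, rfl⟩ := S.exists_common g h
  rw [ι_add, ι_add, S.comm]

lemma lim_zero_add (g : S.Lim) : 0 + g = g := by
  obtain ⟨m, x, -, rfl, -⟩ := S.exists_common g g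
  rw [← S.ι_a m, ι_add, S.comm]
  exact S.ι_φ m x

lemma lim_add_assoc (g h l : S.Lim) : g + h + l = g + (h + l) := by
  obtain ⟨m, x, y, z, rfl, rfl, rfl⟩ := S.exists_common₃ g h l
  rw [ι_add, ι_add, ← S.ι_φ m x, ← S.ι_φ m z, ι_add, ι_add, φ, φ, S.comm z, S.medial]

lemma lim_exists_neg (g : S.Lim) : ∃ h, h + g = 0 := by
  obtain ⟨m, x, -, rfl, -⟩ := S.exists_common g g
  obtain ⟨j, y, h⟩ := S.neg x
  refine ⟨S.ι (m + j) y, ?_⟩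
  rw [← S.ι_shift m j x, ι_add, S.comm, ← S.ι_a (m + j + 1)]
  exact congrArg _ h

noncomputable instance : Neg S.Lim := ⟨fun g => (S.lim_exists_neg g).choose⟩

noncomputable instance : AddCommGroup S.Lim where
  add_assoc := S.lim_add_assoc
  zero_add := S.lim_zero_add
  add_zero g := by rw [lim_add_comm, lim_zero_add]
  add_comm := S.lim_add_comm
  neg_add_cancel g := (S.lim_exists_neg g).choose_spec
  nsmul := nsmulRec
  zsmul := zsmulRec

instance : IsOrderedAddMonoid S.Lim where
  add_le_add_left g h hgh l := by
    obtain ⟨m, x, y, z, rfl, rfl, rfl⟩ := S.exists_common₃ g h l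
    rw [ι_add, ι_add, ι_le_iff]
    exact (S.mono z).monotone (S.ι_le_iff.1 hgh)

end MedialOp

/-! ### Bisymmetric means and their two-variable sections -/

/-- A symmetric, continuous, strictly increasing, idempotent and bisymmetric `n`-ary mean on a
linearly ordered space. -/
structure BisymmMean (X : Type) [LinearOrder X] [TopologicalSpace X] (n : ℕ) where
  M : (Fin n → X) → X
  symm : ∀ (σ : Equiv.Perm (Fin n)) (x : Fin n → X), M (fun i => x (σ i)) = M x
  cont : Continuous M
  mono : ∀ (i : Fin n) (x : Fin n → X), StrictMono fun t => M (Function.update x i t)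
  idem : ∀ c, M (fun _ => c) = c
  bisymm : ∀ x : Fin n → Fin n → X, M (fun i => M (x i)) = M (fun j => M (fun i => x i j))

namespace BisymmMean

open Filter Topology

section Order

variable {X : Type} [LinearOrder X] [TopologicalSpace X] {n : ℕ} (T : BisymmMean X n)
  {i j : Fin n} (hij : i ≠ j) (a : X)

/-- The value of the mean with `x` in coordinate `i`, `y` in coordinate `j` and `a` elsewhere. -/
def pair (i j : Fin n) (a x y : X) : X :=
  T.M (fun t => if t = i then x else if t = j then y else a)

/-- The form of bisymmetry used below: the matrix has rows `u`, `v` and constant rows `a`. -/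
lemma pair_M (u v : Fin n → X) :
    T.pair i j a (T.M u) (T.M v) = T.M (fun t => T.pair i j a (u t) (v t)) := by
  have h := T.bisymm (fun s t => if s = i then u t else if s = j then v t else a)
  rw [pair]
  refine Eq.trans ?_ h
  congr 1
  funext s
  split_ifs
  · rfl
  · rfl
  · exact (T.idem a).symm

include hij in
lemma pair_comm (x y : X) : T.pair i j a x y = T.pair i j a y x := by
  rw [pair, pair, ← T.symm (Equiv.swap i j)]
  congr 1
  funext s
  by_cases h1 : s = i
  · subst h1; simp [hij.symm]
  · by_cases h2 : s = j
    · subst h2; simp [hij.symm]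
    · simp [Equiv.swap_apply_of_ne_of_ne h1 h2, h1, h2]

lemma pair_strictMono (y : X) : StrictMono (fun x => T.pair i j a x y) := by
  have h := T.mono i (fun t => if t = j then y else a)
  convert h using 2 with x
  rw [pair]
  congr 1
  funext t
  simp [Function.update_apply]

lemma pair_medial (x y z w : X) :
    T.pair i j a (T.pair i j a x y) (T.pair i j a z w) =
      T.pair i j a (T.pair i j a x z) (T.pair i j a y w) := by
  calc
    _ = T.M (fun t => T.pair i j a (if t = i then x else if t = j then y else a)
          (if t = i then z else if t = j then w else a)) := T.pair_M a _ _
    _ = _ := by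
      conv_rhs => rw [pair]
      congr 1
      funext t
      split_ifs <;> simp [pair, T.idem]

lemma pair_self : T.pair i j a a a = a := by
  simp [pair, T.idem]

/-- A single entry `x` among `a`s may be placed in any coordinate. -/
lemma M_update (l : Fin n) (x : X) :
    T.M (Function.update (fun _ => a) l x) = T.pair i j a x a := by
  rw [pair, ← T.symm (Equiv.swap i l)]
  congr 1
  funext t
  simp only [Function.update_apply, ite_self]
  congr 1
  rw [Equiv.swap_apply_eq_iff, Equiv.swap_apply_right]

lemma continuous_pair : Continuous fun q : X × X => T.pair i j a q.1 q.2 := by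
  refine T.cont.comp (continuous_pi fun t => ?_)
  split_ifs <;> fun_prop

/-- Coordinates are raised one at a time. -/
lemma M_mono : Monotone T.M := by
  intro x y hxy
  have key : ∀ s : Finset (Fin n), T.M x ≤ T.M (s.piecewise y x) := by
    intro s
    induction s using Finset.induction_on with
    | empty => simp
    | insert l s hl ih =>
      refine ih.trans ?_
      rw [Finset.piecewise_insert]
      have h := (T.mono l (s.piecewise y x)).monotone (hxy l)
      have e : Function.update (s.piecewise y x) l (x l) = s.piecewise y x := by
        rw [Function.update_eq_self_iff, Finset.piecewise_eq_of_notMem _ _ _ hl]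
      simpa only [e] using h
  simpa using key Finset.univ

include hij in
lemma lt_pair {x : X} (h : x < a) : x < T.pair i j a x a := by
  have h1 : T.M (Function.update (fun _ => x) j x) < T.M (Function.update (fun _ => x) j a) :=
    T.mono j (fun _ => x) h
  rw [Function.update_eq_self_iff.2 rfl, T.idem] at h1
  refine h1.trans_le (T.M_mono fun t => ?_)
  rw [Function.update_apply]
  split_ifs with h2 h3
  · exact absurd (h3.symm.trans h2) hij
  · exact le_rfl
  · exact le_rfl
  · exact h.le

include hij in
lemma pair_lt {x : X} (h : a < x) : T.pair i j a x a < x := by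
  have h1 : T.M (Function.update (fun _ => x) j a) < T.M (Function.update (fun _ => x) j x) :=
    T.mono j (fun _ => x) h
  have e : Function.update (fun _ => x) j x = fun _ => x := Function.update_eq_self_iff.2 rfl
  rw [e, T.idem] at h1
  refine lt_of_le_of_lt (T.M_mono fun t => ?_) h1
  rw [Function.update_apply]
  split_ifs with h2 h3 h4
  · exact absurd (h2.symm.trans h3) hij
  · exact le_rfl
  · exact le_rfl
  · exact h.le

/-- If `f` generates the mean, then `x ↦ pair c x c` contracts `f`-distances to `f c` by `n`. -/
lemma generator_pair {f : X → ℝ}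
    (hf : ∀ x : Fin n → X, (n : ℝ) * f (T.M x) = ∑ l, f (x l)) (c y : X) :
    (n : ℝ) * (f (T.pair i j c y c) - f c) = f y - f c := by
  have h := hf fun t => if t = i then y else if t = j then c else c
  have h' : ∑ t, (f (if t = i then y else if t = j then c else c) - f c) = f y - f c := by
    rw [Finset.sum_eq_single i]
    · simp
    · intro t _ ht; simp [ht]
    · simp
  rw [Finset.sum_sub_distrib, ← h] at h'
  simp only [Finset.sum_const, Finset.card_univ, Fintype.card_fin, nsmul_eq_mul] at h'
  rw [pair, ← h']
  ring

lemma generator_iterate {f : X → ℝ}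
    (hf : ∀ x : Fin n → X, (n : ℝ) * f (T.M x) = ∑ l, f (x l)) (c y : X) (m : ℕ) :
    f ((fun x => T.pair i j c x c)^[m] y) = f c + (f y - f c) * ((n : ℝ)⁻¹) ^ m := by
  have hn : (n : ℝ) ≠ 0 := by
    have := i.pos
    positivity
  induction m with
  | zero => simp
  | succ m ih =>
    have h := T.generator_pair (i := i) (j := j) hf c ((fun x => T.pair i j c x c)^[m] y)
    rw [Function.iterate_succ_apply', pow_succ]
    rw [ih] at h
    field_simp at h ⊢
    linarith

end Order

/-! ### The embedding into the reals -/

section Complete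

variable {X : Type} [ConditionallyCompleteLinearOrder X] [TopologicalSpace X] [OrderTopology X]
  {n : ℕ} (T : BisymmMean X n) {i j : Fin n} (hij : i ≠ j) (a : X)

include hij in
/-- The iterates are monotone and bounded by `a`, and `a` is the only possible limit because it is
the only fixed point. -/
lemma tendsto_iterate (x : X) :
    Tendsto (fun m => (fun x => T.pair i j a x a)^[m] x) atTop (𝓝 a) := by
  set φ : X → X := fun x => T.pair i j a x a with hφ
  have hm : Monotone φ := (T.pair_strictMono a a).monotone
  have ha : ∀ m, φ^[m] a = a := Function.iterate_fixed (T.pair_self a)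
  have hc : Continuous φ := (T.continuous_pair a).comp (by fun_prop : Continuous fun x => (x, a))
  have hlim : ∃ c, Tendsto (fun m => φ^[m] x) atTop (𝓝 c) := by
    rcases le_total x a with h | h
    · have hx : x ≤ φ x := by
        rcases h.lt_or_eq with h | h
        · exact (T.lt_pair hij a h).le
        · rw [h]; exact (T.pair_self a).ge
      exact ⟨_, tendsto_atTop_ciSup (hm.monotone_iterate_of_le_map hx)
        ⟨a, by rintro _ ⟨m, rfl⟩; exact (hm.iterate m h).trans_eq (ha m)⟩⟩
    · have hx : φ x ≤ x := by
        rcases h.lt_or_eq with h | h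
        · exact (T.pair_lt hij a h).le
        · rw [← h]; exact (T.pair_self a).le
      exact ⟨_, tendsto_atTop_ciInf (hm.antitone_iterate_of_map_le hx)
        ⟨a, by rintro _ ⟨m, rfl⟩; exact (ha m).symm.trans_le (hm.iterate m h)⟩⟩
  obtain ⟨c, hlim⟩ := hlim
  have hfix : φ c = c := isFixedPt_of_tendsto_iterate hlim hc.continuousAt
  rcases lt_trichotomy c a with h | h | h
  · exact absurd hfix (T.lt_pair hij a h).ne'
  · rwa [← h]
  · exact absurd hfix (T.pair_lt hij a h).ne

/-- The operation `M (x, y, a, …, a)`, for a point `a` which is neither least nor greatest. -/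
def medialOp [DenselyOrdered X] {a₁ a₂ : X} (h₁ : a₁ < a) (h₂ : a < a₂) : MedialOp X where
  p := T.pair i j a
  a := a
  comm := T.pair_comm hij a
  medial := T.pair_medial a
  mono := T.pair_strictMono a
  idem := T.pair_self a
  neg x := by
    have hc : ∀ b, Tendsto (fun m => T.pair i j a ((fun x => T.pair i j a x a)^[m] x) b) atTop
        (𝓝 (T.pair i j a a b)) := fun b =>
      (((T.continuous_pair a).comp (by fun_prop : Continuous fun x => (x, b))).tendsto a).comp
        (T.tendsto_iterate hij a x)
    have e₁ : T.pair i j a a a₁ < a := by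
      rw [T.pair_comm hij]
      exact (T.pair_strictMono a a h₁).trans_eq (T.pair_self a)
    have e₂ : a < T.pair i j a a a₂ := by
      rw [T.pair_comm hij]
      exact (T.pair_self a).symm.trans_lt (T.pair_strictMono a a h₂)
    obtain ⟨m, hm₁, hm₂⟩ :=
      (((hc a₁).eventually_lt_const e₁).and ((hc a₂).eventually_const_lt e₂)).exists
    refine ⟨m, ?_⟩
    exact mem_range_of_exists_le_of_exists_ge
      ((T.continuous_pair a).comp (by fun_prop : Continuous fun y => (_, y)))
      ⟨a₁, hm₁.le⟩ ⟨a₂, hm₂.le⟩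

section Group

variable [DenselyOrdered X] {a₁ a₂ : X} (h₁ : a₁ < a) (h₂ : a < a₂)

/-- In the group, the mean of `x` is the sum of its entries, one level up. The entries `a` of a
vector are replaced by those of `x` one at a time. -/
lemma ι_M (m : ℕ) (x : Fin n → X) :
    (T.medialOp hij a h₁ h₂).ι (m + 1) (T.M x) = ∑ l, (T.medialOp hij a h₁ h₂).ι m (x l) := by
  set S := T.medialOp hij a h₁ h₂ with hS
  have key : ∀ s : Finset (Fin n),
      S.ι (m + 1) (T.M (s.piecewise x fun _ => a)) = ∑ l ∈ s, S.ι m (x l) := by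
    intro s
    induction s using Finset.induction_on with
    | empty =>
      rw [Finset.piecewise_empty, T.idem, Finset.sum_empty]
      exact S.ι_a _
    | insert l s hl ih =>
      have h : S.p (T.M (s.piecewise x fun _ => a)) (S.φ (x l)) =
          S.φ (T.M ((insert l s).piecewise x fun _ => a)) := by
        have e₁ : S.φ (x l) = T.M (Function.update (fun _ => a) l (x l)) :=
          (T.M_update a l (x l)).symm
        have e₂ : S.φ (T.M ((insert l s).piecewise x fun _ => a)) =
            S.p (T.M ((insert l s).piecewise x fun _ => a)) (T.M fun _ => a) := by
          rw [T.idem]; rfl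
        rw [e₁, e₂]
        change T.pair i j a _ _ = T.pair i j a _ _
        rw [pair_M, pair_M]
        congr 1
        funext t
        by_cases ht : t = l
        · subst ht
          simp only [Finset.piecewise_eq_of_notMem _ _ _ hl, Function.update_self,
            Finset.piecewise_insert_self]
          exact T.pair_comm hij a _ _
        · rw [Function.update_of_ne ht, Finset.piecewise_insert, Function.update_of_ne ht]
      rw [Finset.sum_insert hl, ← ih, ← S.ι_φ, ← h, ← S.ι_add, S.ι_φ, add_comm]
  simpa using key Finset.univ

lemma ι_succ (m : ℕ) (x : X) :
    (T.medialOp hij a h₁ h₂).ι (m + 1) x = n • (T.medialOp hij a h₁ h₂).ι m x := by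
  have h := T.ι_M hij a h₁ h₂ m fun _ => x
  simpa [T.idem] using h

lemma ι_add_level (m k : ℕ) (x : X) :
    (T.medialOp hij a h₁ h₂).ι (m + k) x = n ^ k • (T.medialOp hij a h₁ h₂).ι m x := by
  induction k with
  | zero => simp
  | succ k ih => rw [← add_assoc, ι_succ, ih, smul_smul, pow_succ']

/-- For `v > a` and `φᵏ u < v`, the element `ι m u = ι (m + k) (φᵏ u)` is below
`ι (m + k) v = nᵏ • ι m v`. -/
lemma archimedean : Archimedean (T.medialOp hij a h₁ h₂).Lim where
  arch g y hy := by
    obtain ⟨m, u, v, rfl, rfl⟩ := (T.medialOp hij a h₁ h₂).exists_common g y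
    rw [← (T.medialOp hij a h₁ h₂).ι_a m] at hy
    have hv : a < v := ((T.medialOp hij a h₁ h₂).ι_strictMono m).lt_iff_lt.1 hy
    obtain ⟨k, hk⟩ := ((T.tendsto_iterate hij a u).eventually_lt_const hv).exists
    refine ⟨n ^ k, ?_⟩
    rw [← ι_add_level, ← (T.medialOp hij a h₁ h₂).ι_shift m k u]
    exact ((T.medialOp hij a h₁ h₂).ι_strictMono (m + k) hk).le

include hij h₁ h₂ in
lemma exists_generator :
    ∃ f : X → ℝ, StrictMono f ∧ ∀ x : Fin n → X, (n : ℝ) * f (T.M x) = ∑ l, f (x l) := by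
  have := T.archimedean hij a h₁ h₂
  obtain ⟨F, hF⟩ :=
    Archimedean.exists_orderAddMonoidHom_real_injective (T.medialOp hij a h₁ h₂).Lim
  refine ⟨fun x => F ((T.medialOp hij a h₁ h₂).ι 0 x),
    (F.monotone'.strictMono_of_injective hF).comp ((T.medialOp hij a h₁ h₂).ι_strictMono 0), ?_⟩
  intro x
  rw [← map_sum, ← ι_M, ι_succ, map_nsmul, nsmul_eq_mul]

end Group

include hij in
/-- A strictly increasing generator is continuous: near `c` it is squeezed between its values at the
iterates of `x ↦ pair c x c`, which tend to `f c`. -/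
lemma generator_continuous {f : X → ℝ} (hmono : StrictMono f)
    (hf : ∀ x : Fin n → X, (n : ℝ) * f (T.M x) = ∑ l, f (x l)) : Continuous f := by
  rw [continuous_iff_continuousAt]
  intro c
  have hn : (n : ℝ)⁻¹ < 1 := by
    apply inv_lt_one_of_one_lt₀
    have : 1 < n := by
      have := Fin.val_ne_of_ne hij
      omega
    exact_mod_cast this
  have hlim : ∀ y, Tendsto (fun m => f ((fun x => T.pair i j c x c)^[m] y)) atTop (𝓝 (f c)) := by
    intro y
    simp only [T.generator_iterate hf c y]
    have := ((tendsto_pow_atTop_nhds_zero_of_lt_one (by positivity) hn).const_mul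
      (f y - f c)).const_add (f c)
    simpa using this
  have hsm : ∀ m, StrictMono (fun x => T.pair i j c x c)^[m] :=
    fun m => (T.pair_strictMono c c).iterate m
  have hc : ∀ m, (fun x => T.pair i j c x c)^[m] c = c := Function.iterate_fixed (T.pair_self c)
  refine tendsto_order.2 ⟨fun l hl => ?_, fun u hu => ?_⟩
  · by_cases h : ∃ y, y < c
    · obtain ⟨y, hy⟩ := h
      obtain ⟨m, hm⟩ := ((hlim y).eventually_const_lt hl).exists
      have hlt := hsm m hy
      rw [hc] at hlt
      filter_upwards [Ioi_mem_nhds hlt] with t ht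
      exact hm.trans (hmono ht)
    · push Not at h
      exact Eventually.of_forall fun t => hl.trans_le (hmono.monotone (h t))
  · by_cases h : ∃ y, c < y
    · obtain ⟨y, hy⟩ := h
      obtain ⟨m, hm⟩ := ((hlim y).eventually_lt_const hu).exists
      have hlt := hsm m hy
      rw [hc] at hlt
      filter_upwards [Iio_mem_nhds hlt] with t ht
      exact (hmono ht).trans hm
    · push Not at h
      exact Eventually.of_forall fun t => (hmono.monotone (h t)).trans_lt hu

end Complete

/-! ### Quasi-arithmetic means are bisymmetric means -/

section Converse

variable {E : Set ℝ} {n : ℕ} {M : (Fin n → ℝ) → ℝ} {f : ℝ → ℝ}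

lemma mean_of_generator (hE : E.OrdConnected) (hn : 0 < n)
    (hMmaps : ∀ x : Fin n → ℝ, (∀ i, x i ∈ E) → M x ∈ E)
    (hfc : ContinuousOn f E) (hf : StrictMonoOn f E)
    (hM : ∀ x : Fin n → ℝ, (∀ i, x i ∈ E) → f (M x) = (1 / (n : ℝ)) * ∑ i, f (x i)) :
    (∀ (σ : Equiv.Perm (Fin n)) (x : Fin n → ℝ), (∀ i, x i ∈ E) →
        M (fun i => x (σ i)) = M x) ∧
     ContinuousOn M {x : Fin n → ℝ | ∀ i, x i ∈ E} ∧
     (∀ (i : Fin n) (x : Fin n → ℝ), (∀ j, x j ∈ E) →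
        StrictMonoOn (fun t => M (Function.update x i t)) E) ∧
     (∀ c ∈ E, M (fun _ => c) = c) ∧
     (∀ x : Fin n → Fin n → ℝ, (∀ i j, x i j ∈ E) →
        M (fun i => M (x i)) = M (fun j => M (fun i => x i j))) := by
  have hn' : (0 : ℝ) < n := by exact_mod_cast hn
  refine ⟨fun σ x hx => ?_, ?_, fun i x hx s hs t ht hst => ?_, fun c hc => ?_, fun x hx => ?_⟩
  · apply hf.injOn (hMmaps _ fun i => hx _) (hMmaps _ hx)
    rw [hM _ hx, hM _ fun i => hx _, Equiv.sum_comp σ fun i => f (x i)]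
  · intro x hx
    have hfM : ContinuousWithinAt (fun y => f (M y)) {x : Fin n → ℝ | ∀ i, x i ∈ E} x := by
      have : ContinuousOn (fun y : Fin n → ℝ => (1 / (n : ℝ)) * ∑ i, f (y i))
          {x : Fin n → ℝ | ∀ i, x i ∈ E} :=
        continuousOn_const.mul (continuousOn_finsetSum _ fun i _ =>
          hfc.comp (continuous_apply i).continuousOn fun y hy => hy i)
      exact (this.congr fun y hy => hM y hy) x hx
    refine tendsto_order.2 ⟨fun l hl => ?_, fun u hu => ?_⟩
    -- A bound outside `E` lies below all of `E` or above all of `E`.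
    · by_cases hlE : l ∈ E
      · filter_upwards [hfM.eventually_const_lt (hf hlE (hMmaps x hx) hl),
          self_mem_nhdsWithin] with y hy hyE
        exact (hf.lt_iff_lt hlE (hMmaps y hyE)).1 hy
      · filter_upwards [self_mem_nhdsWithin] with y hyE
        by_contra! h
        exact hlE (hE.out (hMmaps y hyE) (hMmaps x hx) ⟨h, hl.le⟩)
    · by_cases huE : u ∈ E
      · filter_upwards [hfM.eventually_lt_const (hf (hMmaps x hx) huE hu),
          self_mem_nhdsWithin] with y hy hyE
        exact (hf.lt_iff_lt (hMmaps y hyE) huE).1 hy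
      · filter_upwards [self_mem_nhdsWithin] with y hyE
        by_contra! h
        exact huE (hE.out (hMmaps x hx) (hMmaps y hyE) ⟨hu.le, h⟩)
  · have hu : ∀ r ∈ E, ∀ l, Function.update x i r l ∈ E := by
      intro r hr l
      rw [Function.update_apply]
      split_ifs
      · exact hr
      · exact hx l
    apply (hf.lt_iff_lt (hMmaps _ (hu s hs)) (hMmaps _ (hu t ht))).1
    rw [hM _ (hu s hs), hM _ (hu t ht)]
    refine mul_lt_mul_of_pos_left ?_ (by positivity)
    refine Finset.sum_lt_sum (fun l _ => ?_) ⟨i, Finset.mem_univ i, ?_⟩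
    · by_cases hl : l = i
      · subst hl
        simpa using (hf hs ht hst).le
      · simp [Function.update_of_ne hl]
    · simpa using hf hs ht hst
  · apply hf.injOn (hMmaps _ fun _ => hc) hc
    rw [hM _ fun _ => hc]
    simp only [Finset.sum_const, Finset.card_univ, Fintype.card_fin, nsmul_eq_mul]
    field_simp
  · have h1 : ∀ i, M (x i) ∈ E := fun i => hMmaps _ (hx i)
    have h2 : ∀ j, M (fun i => x i j) ∈ E := fun j => hMmaps _ fun i => hx i j
    apply hf.injOn (hMmaps _ h1) (hMmaps _ h2)
    rw [hM _ h1, hM _ h2]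
    simp only [hM _ (hx _), hM _ fun i => hx i _, ← Finset.mul_sum]
    rw [Finset.sum_comm]

end Converse

end BisymmMean

/-- **Aczél's theorem** (quasi-arithmetic means).
Let `E` be a real interval with nonempty interior and `n ≥ 2`. A function `M : Eⁿ → E` is
symmetric, continuous, strictly increasing in each variable, idempotent, and bisymmetric
iff it is a quasi-arithmetic mean `M(x) = f⁻¹((1/n) ∑ f(xᵢ))` for some continuous strictly
monotonic `f : E → ℝ` (stated via `f (M x) = (1/n) ∑ f (x i)`). -/
theorem quasiArithmetic_characterization
    (E : Set ℝ) (hE : E.OrdConnected) (hEint : (interior E).Nonempty)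
    (n : ℕ) (hn : 2 ≤ n) (M : (Fin n → ℝ) → ℝ)
    (hMmaps : ∀ x : Fin n → ℝ, (∀ i, x i ∈ E) → M x ∈ E) :
    ((∀ (σ : Equiv.Perm (Fin n)) (x : Fin n → ℝ), (∀ i, x i ∈ E) →
        M (fun i => x (σ i)) = M x) ∧
     ContinuousOn M {x : Fin n → ℝ | ∀ i, x i ∈ E} ∧
     (∀ (i : Fin n) (x : Fin n → ℝ), (∀ j, x j ∈ E) →
        StrictMonoOn (fun t => M (Function.update x i t)) E) ∧
     (∀ c ∈ E, M (fun _ => c) = c) ∧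
     (∀ x : Fin n → Fin n → ℝ, (∀ i j, x i j ∈ E) →
        M (fun i => M (x i)) = M (fun j => M (fun i => x i j)))) ↔
    (∃ f : ℝ → ℝ, ContinuousOn f E ∧ (StrictMonoOn f E ∨ StrictAntiOn f E) ∧
       ∀ x : Fin n → ℝ, (∀ i, x i ∈ E) →
         f (M x) = (1 / (n : ℝ)) * ∑ i, f (x i)) := by
  constructor
  · rintro ⟨hsym, hcont, hmono, hid, hbis⟩
    obtain ⟨a, ha⟩ := hEint
    obtain ⟨ε, hε, hball⟩ := Metric.isOpen_iff.1 isOpen_interior a ha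
    have hnear : ∀ t, |t - a| < ε → t ∈ E := fun t ht =>
      interior_subset (hball (by rwa [Metric.mem_ball, Real.dist_eq]))
    have haE : a ∈ E := interior_subset ha
    have ha₁ : a - ε / 2 ∈ E := hnear _ (by rw [abs_lt]; constructor <;> linarith)
    have ha₂ : a + ε / 2 ∈ E := hnear _ (by rw [abs_lt]; constructor <;> linarith)
    let _ : Inhabited E := ⟨⟨a, haE⟩⟩
    let T : BisymmMean E n :=
      { M := fun x => ⟨M fun i => x i, hMmaps _ fun i => (x i).2⟩
        symm := fun σ x => Subtype.ext (hsym σ (fun i => x i) fun i => (x i).2)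
        cont := by
          refine Continuous.subtype_mk ?_ _
          exact hcont.comp_continuous (by fun_prop) fun x i => (x i).2
        mono := by
          intro i x s t hst
          have h := hmono i (fun j => x j) (fun j => (x j).2) s.2 t.2 hst
          have e : ∀ r : E, (fun l => ((Function.update x i r l : E) : ℝ)) =
              Function.update (fun l => (x l : ℝ)) i r := by
            intro r
            funext l
            simp only [Function.update_apply]
            split_ifs <;> rfl
          rw [← Subtype.coe_lt_coe]
          simpa only [e] using h
        idem := fun c => Subtype.ext (hid c c.2)
        bisymm := fun x => Subtype.ext (hbis (fun i j => x i j) fun i j => (x i j).2) }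
    have hij : (⟨0, by omega⟩ : Fin n) ≠ ⟨1, by omega⟩ := by simp
    obtain ⟨f, hf, hfM⟩ := T.exists_generator hij ⟨a, haE⟩
      (a₁ := ⟨a - ε / 2, ha₁⟩) (a₂ := ⟨a + ε / 2, ha₂⟩)
      (Subtype.mk_lt_mk.2 (by linarith)) (Subtype.mk_lt_mk.2 (by linarith))
    have hfc : Continuous f := T.generator_continuous hij hf hfM
    classical
    let g : ℝ → ℝ := fun t => if h : t ∈ E then f ⟨t, h⟩ else 0
    have hg : ∀ t (h : t ∈ E), g t = f ⟨t, h⟩ := fun t h => dif_pos h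
    refine ⟨g, ?_, Or.inl ?_, ?_⟩
    · rw [continuousOn_iff_continuous_domRestrict]
      convert hfc using 1
      funext t
      exact hg t t.2
    · intro s hs t ht hst
      rw [hg s hs, hg t ht]
      exact hf (Subtype.mk_lt_mk.2 hst)
    · intro x hx
      have h := hfM fun i => ⟨x i, hx i⟩
      rw [hg _ (hMmaps x hx)]
      simp only [hg _ (hx _), ← h]
      have hn' : (n : ℝ) ≠ 0 := by
        have : 0 < n := by omega
        positivity
      rw [one_div, inv_mul_cancel_left₀ hn']
  · rintro ⟨f, hfc, hf | hf, hM⟩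
    · exact BisymmMean.mean_of_generator hE (by omega) hMmaps hfc hf hM
    · refine BisymmMean.mean_of_generator (f := fun t => -f t) hE (by omega) hMmaps hfc.neg
        (fun s hs t ht hst => neg_lt_neg (hf hs ht hst)) fun x hx => ?_
      rw [hM x hx, Finset.sum_neg_distrib, mul_neg]
end

section
/- Let E be a real interval. A sequence of functions (M⁽ⁿ⁾ : Eⁿ → E)_{n≥1} with M⁽¹⁾(x)=x is a decomposable sequence of symmetric, continuous, strictly increasing (in each variable), and idempotent functions if and only if there exists a continuous strictly monotonic function f : E → ℝ such that for every n ≥ 1 and all x ∈ Eⁿ, M⁽ⁿ⁾(x) = f⁻¹( (1/n) ∑_{i=1}^n f(xᵢ) ). -/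
/-!
Only the construction of the generator `f` from the means needs an idea.

By symmetry the `M⁽ⁿ⁾` amount to one function `m` on nonempty multisets of points of `E`.
Decomposability and strict monotonicity imply that adding the same multiset to two multisets of
equal size does not change how their means compare (`IsMean.add_le_iff`). After padding with copies
of a base point to make sizes equal, comparing means is thus a translation-invariant total preorder
on the monoid of multisets, and it passes to a linear order on a quotient `G` of the Grothendieck
group (`exists_ordered_group`, `IsMean.exists_group`). Idempotency gives
`n • e (m S) = ∑ e (xᵢ)` in `G` for `S = {x₁, …, xₙ}`, where `e x` is the class of `x`.

Continuity enters through `x ↦ M⁽²⁾(x, t)`: its iterates converge to its only fixed point `t`, while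
each step halves `e x - e t`. Hence `G` is Archimedean (`IsMean.archimedean`), so by Hölder's theorem
it embeds into `ℝ` as an ordered group, and `f` is the composition of `e` with this embedding.
Finally `f` is strictly increasing with range closed under midpoints, which forces continuity
(`continuous_of_midpoint`).

Conversely, given `f`, each property of `M⁽ⁿ⁾` is checked after applying the injective function `f`;
continuity uses that the inverse of a strictly increasing function on an interval is continuous
(`continuousOn_of_comp`).
-/

/-! ### Ordered groups from invariant preorders -/

universe u in
open Algebra in
/-- A translation-invariant total preorder `R` on a cancellative commutative monoid is the pullback of
the order of a linearly ordered abelian group generated by the image of the monoid. The group is the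
Grothendieck group modulo the elements that are both nonnegative and nonpositive. -/
lemma exists_ordered_group {A : Type u} [AddCommMonoid A] [IsCancelAdd A] (R : A → A → Prop)
    (htot : ∀ a b, R a b ∨ R b a) (htrans : ∀ a b c, R a b → R b c → R a c)
    (hadd : ∀ a b c, R (a + c) (b + c) ↔ R a b) :
    ∃ (G : Type u) (_ : AddCommGroup G) (_ : LinearOrder G) (_ : IsOrderedAddMonoid G)
      (φ : A →+ G), (∀ a b, φ a ≤ φ b ↔ R a b) ∧ ∀ g, ∃ a b, g = φ a - φ b := by
  classical
  let ι : A →+ GrothendieckAddGroup A := GrothendieckAddGroup.of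
  have ιinj : Function.Injective ι := GrothendieckAddGroup.of_injective
  have ιsurj : ∀ g : GrothendieckAddGroup A, ∃ a b, g = ι a - ι b := by
    intro g
    obtain ⟨⟨a, b⟩, h⟩ := (AddLocalization.addMonoidOf (⊤ : AddSubmonoid A)).surj g
    exact ⟨a, b, eq_sub_of_add_eq h⟩
  have hrefl : ∀ a, R a a := fun a => (htot a a).elim id id
  have hadd₂ : ∀ a b c d, R a b → R c d → R (a + c) (b + d) := by
    intro a b c d h₁ h₂
    refine htrans _ (b + c) _ ((hadd _ _ _).2 h₁) ?_
    rw [add_comm b c, add_comm b d]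
    exact (hadd _ _ _).2 h₂
  let P : AddSubmonoid (GrothendieckAddGroup A) :=
    { carrier := {g | ∃ a b, g = ι b - ι a ∧ R a b}
      zero_mem' := ⟨0, 0, by simp, hrefl 0⟩
      add_mem' := by
        rintro _ _ ⟨a, b, rfl, h⟩ ⟨c, d, rfl, h'⟩
        exact ⟨a + c, b + d, by simp only [map_add]; abel, hadd₂ _ _ _ _ h h'⟩ }
  have hP : ∀ a b, ι b - ι a ∈ P ↔ R a b := by
    intro a b
    refine ⟨?_, fun h => ⟨a, b, rfl, h⟩⟩
    rintro ⟨c, d, h, hcd⟩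
    have : b + c = d + a := ιinj (by
      rw [map_add, map_add]; exact sub_eq_sub_iff_add_eq_add.1 h)
    rw [← hadd a b c, this, add_comm a c]
    exact (hadd _ _ _).2 hcd
  have hPtot : ∀ g, g ∈ P ∨ -g ∈ P := by
    intro g
    obtain ⟨a, b, rfl⟩ := ιsurj g
    rw [neg_sub, hP, hP]
    exact htot _ _
  let N : AddSubgroup (GrothendieckAddGroup A) :=
    { carrier := {g | g ∈ P ∧ -g ∈ P}
      zero_mem' := ⟨P.zero_mem, by simp⟩
      add_mem' := by
        rintro a b ⟨h₁, h₂⟩ ⟨h₃, h₄⟩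
        exact ⟨P.add_mem h₁ h₃, by rw [neg_add]; exact P.add_mem h₂ h₄⟩
      neg_mem' := by
        rintro a ⟨h₁, h₂⟩
        exact ⟨h₂, by rwa [neg_neg]⟩ }
  let π : GrothendieckAddGroup A →+ GrothendieckAddGroup A ⧸ N := QuotientAddGroup.mk' N
  have hπ : ∀ g, π g ∈ P.map π ↔ g ∈ P := by
    intro g
    refine ⟨?_, fun h => ⟨g, h, rfl⟩⟩
    rintro ⟨p, hp, hpg⟩
    have : -p + g ∈ N := QuotientAddGroup.eq.1 hpg
    simpa using P.add_mem hp this.1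
  let C : AddGroupCone (GrothendieckAddGroup A ⧸ N) :=
    { P.map π with
      eq_zero_of_mem_of_neg_mem' := by
        intro q h₁ h₂
        obtain ⟨g, rfl⟩ := QuotientAddGroup.mk'_surjective N q
        refine (QuotientAddGroup.eq_zero_iff g).2 ⟨(hπ g).1 h₁, (hπ (-g)).1 ?_⟩
        rw [map_neg]; exact h₂ }
  have : HasMemOrNegMem C := ⟨by
    intro q
    obtain ⟨g, rfl⟩ := QuotientAddGroup.mk'_surjective N q
    refine (hPtot g).imp (fun h => (hπ g).2 h) fun h => ?_
    have := (hπ (-g)).2 h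
    rwa [map_neg] at this⟩
  refine ⟨GrothendieckAddGroup A ⧸ N, inferInstance, LinearOrder.mkOfAddGroupCone C,
    IsOrderedAddMonoid.mkOfCone C, π.comp ι, fun a b => ?_, fun q => ?_⟩
  · rw [← hP, ← hπ, map_sub]
    exact Iff.rfl
  · obtain ⟨g, rfl⟩ := QuotientAddGroup.mk'_surjective N q
    obtain ⟨a, b, rfl⟩ := ιsurj g
    exact ⟨a, b, map_sub π _ _⟩

/-! ### Iterating a map toward its fixed point -/

lemma exists_iterate_lt {T : ℝ → ℝ} {t q s : ℝ} (hts : t < s) (htq : t ≤ q)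
    (hc : ContinuousOn T (Set.Icc t q)) (hT : ∀ x ∈ Set.Icc t q, t ≤ T x ∧ T x ≤ x)
    (hfix : ∀ x ∈ Set.Icc t q, T x = x → x = t) : ∃ j : ℕ, T^[j] q < s := by
  have hmem : ∀ j, T^[j] q ∈ Set.Icc t q := by
    intro j
    induction j with
    | zero => exact ⟨htq, le_rfl⟩
    | succ j ih =>
      rw [Function.iterate_succ_apply']
      exact ⟨(hT _ ih).1, (hT _ ih).2.trans ih.2⟩
  have hanti : Antitone fun j => T^[j] q := antitone_nat_of_succ_le fun j => by
    rw [Function.iterate_succ_apply']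
    exact (hT _ (hmem j)).2
  have hlim := tendsto_atTop_ciInf hanti ⟨t, by rintro _ ⟨j, rfl⟩; exact (hmem j).1⟩
  set L := ⨅ j, T^[j] q
  have hL : L ∈ Set.Icc t q := isClosed_Icc.mem_of_tendsto hlim (.of_forall hmem)
  have hlim' : Filter.Tendsto (fun j => T (T^[j] q)) Filter.atTop (nhds (T L)) :=
    (hc L hL).tendsto.comp (tendsto_nhdsWithin_iff.2 ⟨hlim, .of_forall hmem⟩)
  have hTL : T L = L := by
    refine tendsto_nhds_unique hlim' ?_
    simp only [← Function.iterate_succ_apply']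
    exact (Filter.tendsto_add_atTop_iff_nat 1).2 hlim
  rw [hfix L hL hTL] at hlim
  exact (hlim.eventually (gt_mem_nhds hts)).exists

lemma exists_lt_iterate {T : ℝ → ℝ} {t q s : ℝ} (hts : s < t) (htq : q ≤ t)
    (hc : ContinuousOn T (Set.Icc q t)) (hT : ∀ x ∈ Set.Icc q t, T x ≤ t ∧ x ≤ T x)
    (hfix : ∀ x ∈ Set.Icc q t, T x = x → x = t) : ∃ j : ℕ, s < T^[j] q := by
  have hneg : ∀ x ∈ Set.Icc (-t) (-q), -x ∈ Set.Icc q t := fun x hx =>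
    ⟨by linarith [hx.2], by linarith [hx.1]⟩
  obtain ⟨j, hj⟩ := exists_iterate_lt (T := fun x => -T (-x)) (t := -t) (q := -q) (s := -s)
    (by linarith) (by linarith) ((hc.comp continuousOn_neg hneg).neg)
    (fun x hx => by
      have := hT _ (hneg x hx)
      constructor <;> linarith)
    (fun x hx h => by
      have := hfix _ (hneg x hx) (by linarith)
      linarith)
  refine ⟨j, ?_⟩
  have hconj : Function.Semiconj (fun x : ℝ => -x) T (fun x => -T (-x)) := fun x => by simp
  rw [← (hconj.iterate_right j).eq q] at hj
  linarith

/-! ### Means on multisets -/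

/-- A symmetric, decomposable, idempotent and strictly increasing mean, as a function of finite
multisets; `m 0` is a junk value. The fields `down` and `up` replace continuity: starting
from any `q`, taking the mean with `t` repeatedly gets below every `s > t` and above every `s < t`. -/
structure IsMean {E : Type*} [LinearOrder E] (m : Multiset E → E) : Prop where
  dec : ∀ S T, S ≠ 0 → T ≠ 0 → m (S + T) =
    m (Multiset.replicate S.card (m S) + Multiset.replicate T.card (m T))
  idem : ∀ n x, n ≠ 0 → m (Multiset.replicate n x) = x
  mono : ∀ x y S, x < y → m (x ::ₘ S) < m (y ::ₘ S)
  down : ∀ q t s, t < s → ∃ j : ℕ, (fun x => m {x, t})^[j] q < s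
  up : ∀ q t s, s < t → ∃ j : ℕ, s < (fun x => m {x, t})^[j] q

namespace IsMean

open Multiset

variable {E : Type*} [LinearOrder E] {m : Multiset E → E}

/-- A block may be replaced by copies of its mean; empty blocks are allowed on either side. -/
lemma replicate_add (hm : IsMean m) (S T : Multiset E) :
    m (replicate S.card (m S) + T) = m (S + T) := by
  rcases eq_or_ne S 0 with rfl | hS
  · simp
  have hc : S.card ≠ 0 := by simpa using hS
  rcases eq_or_ne T 0 with rfl | hT
  · simp [hm.idem _ _ hc]
  rw [hm.dec S T hS hT, hm.dec _ T _ hT, hm.idem _ _ hc, card_replicate]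
  intro h
  exact hc (by simpa using congrArg card h)

lemma replicate_lt (hm : IsMean m) {s t : E} (h : s < t) (n : ℕ) (T : Multiset E) :
    m (replicate (n + 1) s + T) < m (replicate (n + 1) t + T) := by
  induction n generalizing T with
  | zero => simpa using hm.mono s t T h
  | succ n ih =>
    rw [replicate_succ, replicate_succ _ (n + 1), cons_add, cons_add]
    refine (hm.mono s t _ h).trans ?_
    rw [← add_cons, ← add_cons]
    exact ih _

/-- If `S` and `S'` are empty the hypothesis `m S < m S'` fails, so the junk value `m 0` is harmless. -/
lemma add_lt (hm : IsMean m) {S S' : Multiset E} (hc : S.card = S'.card) (h : m S < m S')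
    (T : Multiset E) : m (S + T) < m (S' + T) := by
  rw [← hm.replicate_add S, ← hm.replicate_add S', ← hc]
  obtain hS | hS := Nat.eq_zero_or_pos S.card
  · have h₁ := card_eq_zero.1 hS
    have h₂ := card_eq_zero.1 (hc ▸ hS)
    simp [h₁, h₂] at h
  · obtain ⟨n, hn⟩ := Nat.exists_eq_add_of_lt hS
    rw [zero_add] at hn
    rw [hn]
    exact hm.replicate_lt h n T

lemma add_le_iff (hm : IsMean m) {S S' : Multiset E} (hc : S.card = S'.card)
    (T : Multiset E) : m (S + T) ≤ m (S' + T) ↔ m S ≤ m S' := by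
  constructor
  · intro h
    by_contra! h'
    exact absurd (hm.add_lt hc.symm h' T) h.not_gt
  · intro h
    rcases h.lt_or_eq with h | h
    · exact (hm.add_lt hc h T).le
    · rw [← hm.replicate_add S, ← hm.replicate_add S', h, hc]

universe u in
/-- The points of `E` embed into a linearly ordered abelian group in which `m` becomes the arithmetic
mean. The class of a multiset is measured relative to a base point, which maps to `0`; every
element is then a difference of two multisets of equal size, i.e. a multiple of a difference of points. -/
lemma exists_group {E : Type u} [LinearOrder E] {m : Multiset E → E} [Nonempty E] (hm : IsMean m) :
    ∃ (G : Type u) (_ : AddCommGroup G) (_ : LinearOrder G) (_ : IsOrderedAddMonoid G)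
      (e : E → G), StrictMono e ∧ (∀ S, S.card • e (m S) = (S.map e).sum) ∧
        ∀ g, ∃ (N : ℕ) (s t : E), N ≠ 0 ∧ g = N • (e s - e t) := by
  obtain ⟨o⟩ := ‹Nonempty E›
  -- Multisets of different sizes are compared after padding with copies of the base point `o`.
  let R : Multiset E → Multiset E → Prop := fun S T =>
    m (S + replicate T.card o) ≤ m (T + replicate S.card o)
  obtain ⟨G, i₁, i₂, i₃, φ, hφ, hG⟩ := exists_ordered_group R
    (fun S T => le_total _ _)
    (fun S T U h₁ h₂ => by
      have k₁ := (hm.add_le_iff (by simp [add_comm]) (replicate U.card o)).2 h₁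
      have k₂ := (hm.add_le_iff (by simp [add_comm]) (replicate S.card o)).2 h₂
      rw [add_right_comm T] at k₁
      have k := k₁.trans k₂
      rw [add_right_comm S, add_right_comm U] at k
      exact (hm.add_le_iff (by simp [add_comm]) _).1 k)
    (fun S T U => by
      have h := hm.add_le_iff (S := S + replicate T.card o) (S' := T + replicate S.card o)
        (by simp [add_comm]) (U + replicate U.card o)
      rw [add_add_add_comm, add_add_add_comm T, ← Multiset.replicate_add,
        ← Multiset.replicate_add, ← card_add, ← card_add] at h
      exact h)
  have hφeq : ∀ S T : Multiset E, S.card = T.card → m S = m T → φ S = φ T := by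
    intro S T hc h
    refine le_antisymm ((hφ _ _).2 ?_) ((hφ _ _).2 ?_)
    · change m _ ≤ m _
      rw [hc]; exact (hm.add_le_iff hc _).2 h.le
    · change m _ ≤ m _
      rw [hc]; exact (hm.add_le_iff hc.symm _).2 h.ge
  have hφlt : ∀ S T : Multiset E, S.card = T.card → m S < m T → φ S < φ T := by
    intro S T hc h
    rw [← not_le, hφ]
    change ¬ m _ ≤ m _
    rw [hc, not_le]; exact hm.add_lt hc h _
  have hφrep : ∀ (n : ℕ) x, φ (replicate n x) = n • φ {x} := by
    intro n x
    rw [← nsmul_singleton, AddMonoidHom.map_nsmul]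
  have hφS : ∀ S, φ S = S.card • φ {m S} := by
    intro S
    rw [← hφrep]
    rcases eq_or_ne S 0 with rfl | hS
    · simp
    · exact hφeq _ _ (by simp) (hm.idem _ _ (by simpa using hS)).symm
  have hm1 : ∀ x, m {x} = x := fun x => hm.idem 1 x one_ne_zero
  refine ⟨G, i₁, i₂, i₃, fun x => φ {x}, fun x y h => hφlt _ _ rfl (by rwa [hm1, hm1]),
    fun S => ?_, fun g => ?_⟩
  · rw [← hφS]
    conv_lhs => rw [← sum_map_singleton S, map_multiset_sum, map_map]
    rfl
  · obtain ⟨S, T, rfl⟩ := hG g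
    have ho : φ {o} = 0 := by
      rw [← _root_.map_zero φ]
      exact le_antisymm ((hφ _ _).2 (by simp [R])) ((hφ _ _).2 (by simp [R]))
    refine ⟨S.card + T.card + 1, m (S + replicate (T.card + 1) o),
      m (T + replicate (S.card + 1) o), by simp, ?_⟩
    have h₁ := hφS (S + replicate (T.card + 1) o)
    have h₂ := hφS (T + replicate (S.card + 1) o)
    rw [card_add, card_replicate, ← add_assoc, _root_.map_add, hφrep, ho, smul_zero, add_zero] at h₁ h₂
    rw [smul_sub, ← h₁, add_comm S.card, ← h₂]

/-- If `t < s`, then `j` steps of `x ↦ m {x, t}` bring `q` below `s` and divide `e q - e t` by `2 ^ j`, so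
`e q - e t ≤ 2 ^ j • (e s - e t)`; the same holds from the other side. -/
lemma archimedean (hm : IsMean m) {G : Type*} [AddCommGroup G] [LinearOrder G]
    [IsOrderedAddMonoid G] {e : E → G} (he : StrictMono e)
    (hsum : ∀ S, S.card • e (m S) = (S.map e).sum)
    (hG : ∀ g, ∃ (N : ℕ) (s t : E), N ≠ 0 ∧ g = N • (e s - e t)) : Archimedean G := by
  have hmid : ∀ x t, 2 • (e (m {x, t}) - e t) = e x - e t := by
    intro x t
    have h := hsum {x, t}
    simp only [insert_eq_cons, card_cons, card_singleton, map_cons, map_singleton, sum_cons,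
      sum_singleton, Nat.reduceAdd] at h
    change 2 • e (m {x, t}) = _ at h
    rw [smul_sub, h, two_nsmul]
    abel
  have hiter : ∀ q t (j : ℕ), 2 ^ j • (e ((fun x => m {x, t})^[j] q) - e t) = e q - e t := by
    intro q t j
    induction j with
    | zero => simp
    | succ j ih => rw [Function.iterate_succ_apply', pow_succ, mul_smul, hmid, ih]
  have hdown : ∀ q t s, t < s → ∃ k : ℕ, e q - e t ≤ k • (e s - e t) := by
    intro q t s h
    obtain ⟨j, hj⟩ := hm.down q t s h
    refine ⟨2 ^ j, ?_⟩
    rw [← hiter q t j]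
    exact nsmul_le_nsmul_right (sub_le_sub_right (he hj).le _) _
  have hup : ∀ p t s, t < s → ∃ k : ℕ, e s - e p ≤ k • (e s - e t) := by
    intro p t s h
    obtain ⟨j, hj⟩ := hm.up p s t h
    refine ⟨2 ^ j, ?_⟩
    rw [← neg_sub, ← hiter p s j, ← smul_neg, neg_sub]
    exact nsmul_le_nsmul_right (sub_le_sub_left (he hj).le _) _
  refine ⟨fun x y hy => ?_⟩
  obtain ⟨N, s, t, hN, rfl⟩ := hG y
  obtain ⟨n, u, v, -, rfl⟩ := hG x
  have hpos : 0 < e s - e t := (nsmul_pos_iff hN).1 hy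
  have hts : t < s := he.lt_iff_lt.1 (sub_pos.1 hpos)
  obtain ⟨k, hk⟩ := hdown u t s hts
  obtain ⟨l, hl⟩ := hup v t s hts
  have huv : e u - e v ≤ (k + l) • (e s - e t) := by
    calc e u - e v = (e u - e t) + (e s - e v) - (e s - e t) := by abel
      _ ≤ (e u - e t) + (e s - e v) := sub_le_self _ hpos.le
      _ ≤ k • (e s - e t) + l • (e s - e t) := add_le_add hk hl
      _ = _ := (add_smul _ _ _).symm
  refine ⟨n * (k + l), ?_⟩
  rw [mul_smul]
  refine nsmul_le_nsmul_right (huv.trans (nsmul_le_nsmul_right ?_ _)) _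
  exact le_self_nsmul hpos.le hN

theorem exists_generator [Nonempty E] (hm : IsMean m) :
    ∃ f : E → ℝ, StrictMono f ∧ ∀ S, S.card * f (m S) = (S.map f).sum := by
  obtain ⟨G, _, _, _, e, he, hsum, hG⟩ := hm.exists_group
  have := hm.archimedean he hsum hG
  obtain ⟨h, hinj⟩ := Archimedean.exists_orderAddMonoidHom_real_injective G
  refine ⟨fun x => h (e x), (h.monotone'.strictMono_of_injective hinj).comp he, fun S => ?_⟩
  have := congrArg h (hsum S)
  rw [_root_.map_nsmul, map_multiset_sum, map_map, nsmul_eq_mul] at this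
  exact this

end IsMean

/-! ### Continuity of monotone functions -/

/-- Midpoints produce values of `f` arbitrarily close to `f x` on each side of `x` where `E` has points,
and monotonicity turns these into neighbourhoods of `x`. -/
lemma continuous_of_midpoint {E : Type*} [LinearOrder E] [TopologicalSpace E] [OrderTopology E]
    {f : E → ℝ} (hf : StrictMono f) (hmid : ∀ x y, ∃ z, f z = (f x + f y) / 2) :
    Continuous f := by
  have hiter : ∀ x y (j : ℕ), ∃ z, f z = f x + (f y - f x) / 2 ^ j := by
    intro x y j
    induction j with
    | zero => exact ⟨y, by simp⟩
    | succ j ih =>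
      obtain ⟨z, hz⟩ := ih
      obtain ⟨w, hw⟩ := hmid x z
      exact ⟨w, by rw [hw, hz, pow_succ]; field_simp; ring⟩
  have hlim : ∀ x y, Filter.Tendsto (fun j : ℕ => f x + (f y - f x) / 2 ^ j) Filter.atTop
      (nhds (f x)) := by
    intro x y
    have h : Filter.Tendsto (fun j : ℕ => f x + (f y - f x) * (1 / 2) ^ j) Filter.atTop
        (nhds (f x + (f y - f x) * 0)) :=
      ((tendsto_pow_atTop_nhds_zero_of_lt_one (by norm_num) (by norm_num)).const_mul _).const_add _
    simpa [div_eq_mul_inv] using h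
  refine continuous_iff_continuousAt.2 fun x => tendsto_order.2 ⟨fun a ha => ?_, fun a ha => ?_⟩
  · by_cases hx : ∃ y, y < x
    · obtain ⟨y, hy⟩ := hx
      obtain ⟨j, hj⟩ := ((hlim x y).eventually (lt_mem_nhds ha)).exists
      obtain ⟨z, hz⟩ := hiter x y j
      have hzx : z < x := by
        rw [← hf.lt_iff_lt, hz, add_lt_iff_neg_left]
        exact div_neg_of_neg_of_pos (sub_neg.2 (hf hy)) (by positivity)
      filter_upwards [lt_mem_nhds hzx] with w hw
      exact (hz ▸ hj).trans (hf hw)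
    · push Not at hx
      exact .of_forall fun y => ha.trans_le (hf.monotone (hx y))
  · by_cases hx : ∃ y, x < y
    · obtain ⟨y, hy⟩ := hx
      obtain ⟨j, hj⟩ := ((hlim x y).eventually (gt_mem_nhds ha)).exists
      obtain ⟨z, hz⟩ := hiter x y j
      have hzx : x < z := by
        rw [← hf.lt_iff_lt, hz, lt_add_iff_pos_right]
        exact div_pos (sub_pos.2 (hf hy)) (by positivity)
      filter_upwards [gt_mem_nhds hzx] with w hw
      exact (hf hw).trans (hz ▸ hj)
    · push Not at hx
      exact .of_forall fun y => (hf.monotone (hx y)).trans_lt ha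

/-! ### From tuples to multisets -/

/-- A symmetric family of functions of tuples factors through multisets: two tuples that enumerate the
same multiset have the same sorted rearrangement. -/
lemma exists_multiset_fun {E : Type*} [LinearOrder E] [Nonempty E] (F : (n : ℕ) → (Fin n → E) → E)
    (hsymm : ∀ n, 1 ≤ n → ∀ (σ : Equiv.Perm (Fin n)) x, F n (x ∘ σ) = F n x) :
    ∃ m : Multiset E → E, ∀ n, 1 ≤ n → ∀ x : Fin n → E, m (List.ofFn x) = F n x := by
  classical
  have hperm : ∀ n, 1 ≤ n → ∀ x y : Fin n → E, (List.ofFn x).Perm (List.ofFn y) →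
      F n x = F n y := by
    intro n hn x y h
    have : x ∘ Tuple.sort x = y ∘ Tuple.sort y := List.ofFn_injective <|
      (((Tuple.sort x).ofFn_comp_perm x).trans
        (h.trans ((Tuple.sort y).ofFn_comp_perm y).symm)).eq_of_pairwise'
        (Tuple.monotone_sort x).sortedLE_ofFn.pairwise
        (Tuple.monotone_sort y).sortedLE_ofFn.pairwise
    rw [← hsymm n hn (Tuple.sort x), this, hsymm n hn]
  refine ⟨fun S => F S.toList.length S.toList.get, fun n hn x => ?_⟩
  have h : ((List.ofFn x : Multiset E)).toList.Perm (List.ofFn x) :=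
    Multiset.coe_eq_coe.1 (Multiset.coe_toList _)
  change F ((List.ofFn x : Multiset E)).toList.length ((List.ofFn x : Multiset E)).toList.get = _
  generalize ((List.ofFn x : Multiset E)).toList = l at h
  obtain rfl : l.length = n := by simpa using h.length_eq
  exact hperm _ hn _ _ (by rwa [List.ofFn_get])


lemma Multiset.exists_ofFn {E : Type*} (S : Multiset E) :
    ∃ (n : ℕ) (x : Fin n → E), S = (List.ofFn x : Multiset E) := by
  induction S using Quotient.inductionOn with
  | h l => exact ⟨l.length, l.get, by rw [List.ofFn_get]; rfl⟩

/-- The properties of the family `M` on tuples, read off for the induced function on multisets. -/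
lemma isMean_of {E : Set ℝ} (hE : E.OrdConnected)
    {M : (n : ℕ) → (Fin n → ℝ) → ℝ}
    (hdec : ∀ a b : ℕ, 1 ≤ a → 1 ≤ b → ∀ (x : Fin a → ℝ) (y : Fin b → ℝ), (∀ i, x i ∈ E) →
      (∀ i, y i ∈ E) → M (a + b) (Fin.append x y) =
        M (a + b) (Fin.append (fun _ : Fin a => M a x) fun _ : Fin b => M b y))
    (hcont : ∀ n, 1 ≤ n → ContinuousOn (M n) {x : Fin n → ℝ | ∀ i, x i ∈ E})
    (hmono : ∀ n, 1 ≤ n → ∀ (i : Fin n) (x : Fin n → ℝ), (∀ j, x j ∈ E) →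
        StrictMonoOn (fun t => M n (Function.update x i t)) E)
    (hidem : ∀ n, 1 ≤ n → ∀ c ∈ E, M n (fun _ => c) = c)
    {m : Multiset E → E}
    (hm : ∀ n, 1 ≤ n → ∀ x : Fin n → E, (m (List.ofFn x) : ℝ) = M n (fun i => x i)) :
    IsMean m := by
  have hm_idem : ∀ n x, n ≠ 0 → m (Multiset.replicate n x) = x := by
    intro n x hn
    have h := hm n (Nat.one_le_iff_ne_zero.2 hn) fun _ => x
    rw [List.ofFn_const, hidem n (Nat.one_le_iff_ne_zero.2 hn) x x.2] at h
    exact Subtype.ext h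
  have hm_mono : ∀ x y S, x < y → m (x ::ₘ S) < m (y ::ₘ S) := by
    intro x y S hxy
    obtain ⟨n, g, rfl⟩ := S.exists_ofFn
    have hcons : ∀ z : E, (m (z ::ₘ (List.ofFn g : Multiset E)) : ℝ) =
        M (n + 1) (Function.update (fun i => ((Fin.cons x g : Fin (n + 1) → E) i : ℝ)) 0 z) := by
      intro z
      have h := hm (n + 1) (by omega) (Fin.cons z g)
      rw [List.ofFn_cons] at h
      rw [Multiset.cons_coe, h]
      congr 1
      funext i
      refine Fin.cases ?_ (fun j => ?_) i <;> simp
    rw [← Subtype.coe_lt_coe, hcons, hcons]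
    exact hmono (n + 1) (by omega) 0 _ (fun j => Subtype.coe_prop _) x.2 y.2 hxy
  have hpair : ∀ x t : E, (m {x, t} : ℝ) = M 2 ![(x : ℝ), t] := by
    intro x t
    have h := hm 2 (by norm_num) ![x, t]
    rw [show (List.ofFn ![x, t] : Multiset E) = {x, t} by simp; rfl] at h
    rw [h]
    congr 1
    funext i
    fin_cases i <;> rfl
  have hpair_idem : ∀ x, m {x, x} = x := fun x => hm_idem 2 x two_ne_zero
  have hpair_left : ∀ x y t, x < y → m {x, t} < m {y, t} := fun x y t h => hm_mono x y {t} h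
  have hpair_right : ∀ x y t, x < y → m {t, x} < m {t, y} := by
    intro x y t h
    rw [Multiset.pair_comm t, Multiset.pair_comm t]
    exact hpair_left x y t h
  have hpair_fix : ∀ x t, m {x, t} = x → x = t := by
    intro x t h
    rcases lt_trichotomy x t with h' | h' | h'
    · have := hpair_right _ _ x h'
      rw [hpair_idem, h] at this
      exact absurd this (lt_irrefl _)
    · exact h'
    · have := hpair_right _ _ x h'
      rw [hpair_idem, h] at this
      exact absurd this (lt_irrefl _)
  -- The mean of `x` and `t` lies between them.
  have hpair_ge : ∀ x t, t ≤ x → t ≤ m {x, t} := by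
    intro x t h
    rcases h.lt_or_eq with h | rfl
    · have := (hpair_left _ _ t h).le
      rwa [hpair_idem] at this
    · rw [hpair_idem]
  have hpair_le : ∀ x t, t ≤ x → m {x, t} ≤ x := by
    intro x t h
    rcases h.lt_or_eq with h | rfl
    · have := (hpair_right _ _ x h).le
      rwa [hpair_idem] at this
    · rw [hpair_idem]
  have hpair_cont : ∀ t ∈ E, ContinuousOn (fun x => M 2 ![x, t]) E := by
    intro t ht
    refine (hcont 2 (by norm_num)).comp (Continuous.continuousOn (by fun_prop)) ?_
    intro x hx i
    fin_cases i
    · exact hx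
    · exact ht
  have hiter : ∀ (q t : E) (j : ℕ), (((fun x => m {x, t})^[j] q : E) : ℝ) =
      (fun x => M 2 ![x, (t : ℝ)])^[j] q := by
    intro q t j
    induction j with
    | zero => rfl
    | succ j ih =>
      rw [Function.iterate_succ_apply', Function.iterate_succ_apply', ← ih]
      exact hpair _ _
  refine ⟨?_, hm_idem, hm_mono, ?_, ?_⟩
  · intro S T hS hT
    obtain ⟨a, x, rfl⟩ := S.exists_ofFn
    obtain ⟨b, y, rfl⟩ := T.exists_ofFn
    have ha : 1 ≤ a := by
      rw [Nat.one_le_iff_ne_zero]; rintro rfl; exact hS (by simp)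
    have hb : 1 ≤ b := by
      rw [Nat.one_le_iff_ne_zero]; rintro rfl; exact hT (by simp)
    have h₁ := hm (a + b) (by omega) (Fin.append x y)
    set s := m (List.ofFn x)
    set t := m (List.ofFn y)
    have h₂ := hm (a + b) (by omega) (Fin.append (fun _ : Fin a => s) fun _ : Fin b => t)
    rw [List.ofFn_fin_append, ← Multiset.coe_add] at h₁ h₂
    rw [List.ofFn_const, List.ofFn_const, Multiset.coe_replicate, Multiset.coe_replicate] at h₂
    rw [Multiset.coe_card, Multiset.coe_card, List.length_ofFn, List.length_ofFn]
    refine Subtype.ext ?_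
    have happ : ∀ (u : Fin a → E) (v : Fin b → E), (fun i => ((Fin.append u v i : E) : ℝ)) =
        Fin.append (fun i => (u i : ℝ)) fun i => (v i : ℝ) := by
      intro u v
      funext i
      refine Fin.addCases (fun j => ?_) (fun j => ?_) i <;> simp
    rw [h₁, h₂, happ, happ, hdec a b ha hb _ _ (fun i => (x i).2) fun i => (y i).2, ← hm a ha x,
      ← hm b hb y]
  · intro q t s hts
    rcases le_or_gt q t with hqt | hqt
    · exact ⟨0, hqt.trans_lt hts⟩
    have hIcc : Set.Icc (t : ℝ) q ⊆ E := hE.out t.2 q.2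
    obtain ⟨j, hj⟩ := exists_iterate_lt (T := fun x => M 2 ![x, (t : ℝ)]) (Subtype.coe_lt_coe.2 hts)
      (Subtype.coe_le_coe.2 hqt.le) ((hpair_cont t t.2).mono hIcc)
      (fun x hx => by
        lift x to E using hIcc hx
        rw [← hpair]
        exact ⟨hpair_ge x t hx.1, hpair_le x t hx.1⟩)
      (fun x hx h => by
        lift x to E using hIcc hx
        rw [← hpair] at h
        exact congrArg _ (hpair_fix x t (Subtype.ext h)))
    exact ⟨j, by rw [← Subtype.coe_lt_coe, hiter]; exact hj⟩
  · intro q t s hts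
    rcases le_or_gt t q with hqt | hqt
    · exact ⟨0, hts.trans_le hqt⟩
    have hIcc : Set.Icc (q : ℝ) t ⊆ E := hE.out q.2 t.2
    obtain ⟨j, hj⟩ := exists_lt_iterate (T := fun x => M 2 ![x, (t : ℝ)]) (Subtype.coe_lt_coe.2 hts)
      (Subtype.coe_le_coe.2 hqt.le) ((hpair_cont t t.2).mono hIcc)
      (fun x hx => by
        lift x to E using hIcc hx
        rw [← hpair, Multiset.pair_comm]
        exact ⟨hpair_le t x hx.2, hpair_ge t x hx.2⟩)
      (fun x hx h => by
        lift x to E using hIcc hx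
        rw [← hpair] at h
        exact congrArg _ (hpair_fix x t (Subtype.ext h)))
    exact ⟨j, by rw [← Subtype.coe_lt_coe, hiter]; exact hj⟩

/-- The inverse of a strictly increasing function on an interval is continuous. A bound `a` outside the
interval `E` lies on one side of all of `E`. -/
lemma continuousOn_of_comp {X : Type*} [TopologicalSpace X] {E : Set ℝ} (hE : E.OrdConnected)
    {f : ℝ → ℝ} (hf : StrictMonoOn f E) {D : Set X} {g : X → ℝ} (hg : Set.MapsTo g D E)
    (hfg : ContinuousOn (fun x => f (g x)) D) : ContinuousOn g D := by
  intro x hx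
  refine tendsto_order.2 ⟨fun a ha => ?_, fun a ha => ?_⟩
  · by_cases haE : a ∈ E
    · filter_upwards [(hfg x hx).eventually (lt_mem_nhds (hf haE (hg hx) ha)),
        self_mem_nhdsWithin] with y hy hyD
      exact (hf.lt_iff_lt haE (hg hyD)).1 hy
    · filter_upwards [self_mem_nhdsWithin] with y hyD
      by_contra! h
      exact haE (hE.out (hg hyD) (hg hx) ⟨h, ha.le⟩)
  · by_cases haE : a ∈ E
    · filter_upwards [(hfg x hx).eventually (gt_mem_nhds (hf (hg hx) haE ha)),
        self_mem_nhdsWithin] with y hy hyD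
      exact (hf.lt_iff_lt (hg hyD) haE).1 hy
    · filter_upwards [self_mem_nhdsWithin] with y hyD
      by_contra! h
      exact haE (hE.out (hg hx) (hg hyD) ⟨ha.le, h⟩)

/-! ### The characterization -/

/-- **Kolmogoroff–Nagumo theorem.**
A sequence `(M⁽ⁿ⁾ : Eⁿ → E)` with `M⁽¹⁾(x) = x` is a decomposable sequence of symmetric,
continuous, strictly increasing (in each variable), and idempotent functions iff there is a
continuous strictly monotonic `f : E → ℝ` with `M⁽ⁿ⁾(x) = f⁻¹((1/n) ∑ f(xᵢ))` for all `n ≥ 1`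
(stated via `f (M⁽ⁿ⁾ x) = (1/n) ∑ f (x i)`). -/
theorem kolmogoroff_nagumo
    (E : Set ℝ) (hE : E.OrdConnected) (hEne : E.Nonempty)
    (M : (n : ℕ) → (Fin n → ℝ) → ℝ)
    (hmaps : ∀ n, 1 ≤ n → ∀ x : Fin n → ℝ, (∀ i, x i ∈ E) → M n x ∈ E) :
    ((∀ x : Fin 1 → ℝ, x 0 ∈ E → M 1 x = x 0) ∧
     (∀ (n k : ℕ) (h1 : 1 ≤ k) (h2 : k ≤ n) (x : Fin n → ℝ), (∀ i, x i ∈ E) →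
        M n x = M n (fun i => if (i : ℕ) < k
          then M k (fun j : Fin k => x ⟨j, lt_of_lt_of_le j.isLt h2⟩)
          else M (n - k) (fun j : Fin (n - k) => x ⟨k + j, by have := j.isLt; omega⟩)) ) ∧
     (∀ n, 1 ≤ n → ∀ (σ : Equiv.Perm (Fin n)) (x : Fin n → ℝ), (∀ i, x i ∈ E) →
        M n (fun i => x (σ i)) = M n x) ∧
     (∀ n, 1 ≤ n → ContinuousOn (M n) {x : Fin n → ℝ | ∀ i, x i ∈ E}) ∧
     (∀ n, 1 ≤ n → ∀ (i : Fin n) (x : Fin n → ℝ), (∀ j, x j ∈ E) →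
        StrictMonoOn (fun t => M n (Function.update x i t)) E) ∧
     (∀ n, 1 ≤ n → ∀ c ∈ E, M n (fun _ => c) = c)) ↔
    (∃ f : ℝ → ℝ, ContinuousOn f E ∧ (StrictMonoOn f E ∨ StrictAntiOn f E) ∧
       ∀ n, 1 ≤ n → ∀ x : Fin n → ℝ, (∀ i, x i ∈ E) →
         f (M n x) = (1 / (n : ℝ)) * ∑ i, f (x i)) := by
  constructor
  · rintro ⟨-, hdec, hsymm, hcont, hmono, hidem⟩
    classical
    have : Nonempty E := hEne.to_subtype
    obtain ⟨m, hm⟩ := exists_multiset_fun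
      (fun n (x : Fin n → E) => if hn : 1 ≤ n then
        (⟨M n (fun i => x i), hmaps n hn _ fun i => (x i).2⟩ : E) else Classical.arbitrary E)
      (fun n hn σ x => by
        simp only [dif_pos hn]
        exact Subtype.ext (hsymm n hn σ (fun i => x i) fun i => (x i).2))
    replace hm : ∀ n, 1 ≤ n → ∀ x : Fin n → E,
        (m (List.ofFn x) : ℝ) = M n (fun i => x i) := by
      intro n hn x
      rw [hm n hn x, dif_pos hn]
    have hdec' : ∀ a b : ℕ, 1 ≤ a → 1 ≤ b → ∀ (x : Fin a → ℝ) (y : Fin b → ℝ), (∀ i, x i ∈ E) →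
        (∀ i, y i ∈ E) → M (a + b) (Fin.append x y) =
          M (a + b) (Fin.append (fun _ : Fin a => M a x) fun _ : Fin b => M b y) := by
      intro a b ha hb x y hx hy
      rw [hdec (a + b) a ha (Nat.le_add_right _ _) _ fun i => by
        refine Fin.addCases (fun j => ?_) (fun j => ?_) i
        · simpa using hx j
        · simpa using hy j]
      -- The tail block is indexed by `Fin (a + b - a)`, hence the detour through `c = b`.
      have htail : ∀ c (hc : c = b), M c (fun j : Fin c =>
          Fin.append x y (⟨a + j, by have := j.isLt; omega⟩ : Fin (a + b))) = M b y := by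
        rintro c rfl
        congr 1
        funext j
        exact Fin.append_right x y j
      have hhead : (fun j : Fin a => Fin.append x y
          ⟨j, lt_of_lt_of_le j.isLt (Nat.le_add_right _ _)⟩) = x := by
        funext j
        exact Fin.append_left x y j
      rw [htail (a + b - a) (by omega), hhead]
      congr 1
      funext i
      refine Fin.addCases (fun j => ?_) (fun j => ?_) i <;> simp
    obtain ⟨f, hf, hfm⟩ := (isMean_of hE hdec' hcont hmono hidem hm).exists_generator
    have hfc : Continuous f := continuous_of_midpoint hf fun x y => ⟨m {x, y}, by
      have h := hfm {x, y}
      simp only [Multiset.insert_eq_cons, Multiset.card_cons, Multiset.card_singleton,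
        Multiset.map_cons, Multiset.map_singleton, Multiset.sum_cons, Multiset.sum_singleton] at h
      push_cast at h
      rw [Multiset.insert_eq_cons]
      linarith⟩
    let F : ℝ → ℝ := fun x => if hx : x ∈ E then f ⟨x, hx⟩ else 0
    have hF : ∀ x : E, F x = f x := fun x => dif_pos x.2
    refine ⟨F, ?_, Or.inl ?_, ?_⟩
    · rw [continuousOn_iff_continuous_domRestrict]
      exact hfc.congr fun x => (hF x).symm
    · intro x hx y hy hxy
      rw [hF ⟨x, hx⟩, hF ⟨y, hy⟩]
      exact hf hxy
    · intro n hn x hx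
      lift x to Fin n → E using hx
      have h := hfm (List.ofFn x)
      rw [← hm n hn x, hF]
      simp only [hF]
      rw [Multiset.coe_card, List.length_ofFn, Multiset.map_coe, Multiset.sum_coe, List.map_ofFn,
        List.sum_ofFn] at h
      have hn' : (n : ℝ) ≠ 0 := by positivity
      rw [← mul_right_inj' hn', h]
      field_simp
      rfl
  · rintro ⟨f, hfc, hf, hfM⟩
    -- Replacing `f` by `-f` if necessary, `f` is increasing.
    wlog hfm : StrictMonoOn f E generalizing f
    · refine this (fun x => -f x) hfc.neg ?_ ?_ ?_
      · exact Or.inl (hf.resolve_left hfm).neg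
      · intro n hn x hx
        simp only [hfM n hn x hx, Finset.sum_neg_distrib, mul_neg]
      · exact (hf.resolve_left hfm).neg
    clear hf
    have hidem : ∀ n, 1 ≤ n → ∀ c ∈ E, M n (fun _ => c) = c := by
      intro n hn c hc
      refine hfm.injOn (hmaps n hn _ fun _ => hc) hc ?_
      have hn' : (n : ℝ) ≠ 0 := by positivity
      rw [hfM n hn _ fun _ => hc]
      simp [hn']
    refine ⟨?_, ?_, ?_, ?_, ?_, hidem⟩
    · intro x hx
      have : x = fun _ => x 0 := by funext i; rw [Subsingleton.elim i 0]
      rw [this]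
      exact hidem 1 le_rfl _ hx
    · intro n k h1 h2 x hx
      obtain ⟨d, rfl⟩ := Nat.exists_eq_add_of_le h2
      -- The tail block is indexed by `Fin (k + d - k)`, hence the detour through `c = d`.
      have htail : ∀ c (hc : c = d), M c (fun j : Fin c =>
          x (⟨k + j, by have := j.isLt; omega⟩ : Fin (k + d))) =
          M d (fun j => x (Fin.natAdd k j)) := by
        rintro c rfl
        rfl
      rw [htail (k + d - k) (by omega)]
      have hhead : (fun j : Fin k => x ⟨j, lt_of_lt_of_le j.isLt h2⟩) =
        fun j => x (Fin.castAdd d j) := rfl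
      rw [hhead]
      have hkE : M k (fun j => x (Fin.castAdd d j)) ∈ E := hmaps k h1 _ fun _ => hx _
      have hdE : 1 ≤ d → M d (fun j => x (Fin.natAdd k j)) ∈ E :=
        fun hd => hmaps d hd _ fun _ => hx _
      have hE' : ∀ i : Fin (k + d), (if (i : ℕ) < k then M k (fun j => x (Fin.castAdd d j))
          else M d (fun j => x (Fin.natAdd k j))) ∈ E := by
        intro i
        split_ifs with h
        · exact hkE
        · exact hdE (by have := i.isLt; omega)
      have hk0 : (k : ℝ) ≠ 0 := by positivity
      refine hfm.injOn (hmaps _ (by omega) _ hx) (hmaps _ (by omega) _ hE') ?_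
      rw [hfM _ (by omega) _ hx, hfM _ (by omega) _ hE', Fin.sum_univ_add, Fin.sum_univ_add]
      simp only [Fin.val_castAdd, Fin.is_lt, if_true, Fin.val_natAdd, Nat.not_lt.2
        (Nat.le_add_right _ _), if_false, Finset.sum_const, Finset.card_univ, Fintype.card_fin,
        nsmul_eq_mul]
      rw [hfM k h1 _ fun _ => hx _]
      congr 2
      · field_simp
      · rcases Nat.eq_zero_or_pos d with rfl | hd
        · simp
        · have hd0 : (d : ℝ) ≠ 0 := by positivity
          rw [hfM d hd _ fun _ => hx _]
          field_simp
    · intro n hn σ x hx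
      refine hfm.injOn (hmaps n hn _ fun _ => hx _) (hmaps n hn _ hx) ?_
      rw [hfM n hn _ hx, hfM n hn _ fun _ => hx _, Equiv.sum_comp σ fun i => f (x i)]
    · intro n hn
      refine continuousOn_of_comp hE hfm (fun x hx => hmaps n hn x hx) ?_
      refine ContinuousOn.congr ?_ fun x hx => hfM n hn x hx
      refine continuousOn_const.mul (continuousOn_finsetSum _ fun i _ => ?_)
      exact hfc.comp (continuous_apply i).continuousOn fun x hx => hx i
    · intro n hn i x hx s hs t ht hst
      have hup : ∀ c ∈ E, ∀ j, Function.update x i c j ∈ E := by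
        intro c hc j
        rcases eq_or_ne j i with rfl | h
        · simpa using hc
        · simpa [h] using hx j
      have hn' : (0 : ℝ) < 1 / n := by positivity
      refine (hfm.lt_iff_lt (hmaps n hn _ (hup s hs)) (hmaps n hn _ (hup t ht))).1 ?_
      rw [hfM n hn _ (hup s hs), hfM n hn _ (hup t ht)]
      refine mul_lt_mul_of_pos_left (Finset.sum_lt_sum (fun j _ => ?_) ⟨i, Finset.mem_univ i, ?_⟩) hn'
      · rcases eq_or_ne j i with rfl | h
        · simpa using (hfm hs ht hst).le
        · simp [h]
      · simpa using hfm hs ht hst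
end

section
/- Let E ⊆ (0,∞) be a real interval and n ≥ 2. A quasi-arithmetic mean M : Eⁿ → E (i.e., M(x) = f⁻¹((1/n)∑ f(xᵢ)) for some continuous strictly monotonic f : E → ℝ) satisfies M(r·x₁,…,r·xₙ) = r·M(x₁,…,xₙ) for all r > 0 and all x ∈ Eⁿ with r·x ∈ Eⁿ, if and only if either M is the geometric mean M(x) = (∏_{i=1}^n xᵢ)^{1/n}, or there exists α ∈ ℝ∖{0} such that M is the root-mean-power M(x) = ( (1/n) ∑_{i=1}^n xᵢ^α )^{1/α}. -/
/-!
If `M` is homogeneous, then for each `r > 0` the functions `f` and `x ↦ f (r * x)` generate the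
same quasi-arithmetic mean on `E ∩ r⁻¹ E`, and a maximum principle (`affine_on_Icc`) shows that two
such generators are affinely related: `f (r * x) = a r * f x + b r` (`affine_on`).

On the interior of `E` this equation transports differentiability from one point to all the others,
and one point exists because `f` is monotone (`differentiableAt_of_scaling`). Eliminating
`a r` and `b r` and differentiating at `r = 1` gives Euler's equation `x * f' x = A * f x + B`
(`euler_equation`). Its solutions are `C * log x + D` for `A = 0` and `C * x ^ A + D` for
`A ≠ 0`. By continuity the formula for `f` holds on all of `E`, and inverting it gives the geometric
mean or the root-mean-power with exponent `A`.
-/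

open Set Filter Topology

/-- For a function `d` satisfying the mean-value identity `d (M x) = (1/n) ∑ d (x i)` for a
quasi-arithmetic mean `M`, a maximum principle holds: if `d` vanishes at the end points of an
interval, it is nonpositive on it. At the leftmost maximum point `z` one can write
`z = M (u, v, z, …, z)` with `u < z < v`, which forces `d u = d z`. -/
lemma le_zero_of_mean {n : ℕ} (hn : 2 ≤ n) {M : (Fin n → ℝ) → ℝ} {f d : ℝ → ℝ} {p q : ℝ}
    (hfc : ContinuousOn f (Icc p q)) (hf : StrictMonoOn f (Icc p q))
    (hdc : ContinuousOn d (Icc p q))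
    (hM : ∀ x : Fin n → ℝ, (∀ i, x i ∈ Icc p q) → M x ∈ Icc p q)
    (hfM : ∀ x : Fin n → ℝ, (∀ i, x i ∈ Icc p q) → f (M x) = (1 / (n : ℝ)) * ∑ i, f (x i))
    (hdM : ∀ x : Fin n → ℝ, (∀ i, x i ∈ Icc p q) → d (M x) = (1 / (n : ℝ)) * ∑ i, d (x i))
    (hp : d p = 0) (hq : d q = 0) : ∀ x ∈ Icc p q, d x ≤ 0 := by
  intro x hx
  by_contra! hpos
  have hpq : p ≤ q := hx.1.trans hx.2
  have hn0 : (n : ℝ) ≠ 0 := by positivity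
  obtain ⟨m, hm, hmax⟩ := isCompact_Icc.exists_isMaxOn ⟨x, hx⟩ hdc
  have hmax' : ∀ y ∈ Icc p q, d y ≤ d m := fun y hy => hmax hy
  have hdm : 0 < d m := hpos.trans_le (hmax' x hx)
  have hcl : IsCompact (Icc p q ∩ d ⁻¹' {d m}) :=
    isCompact_Icc.of_isClosed_subset
      (hdc.preimage_isClosed_of_isClosed isClosed_Icc isClosed_singleton) inter_subset_left
  obtain ⟨z, ⟨hz, hzm⟩, hzleast⟩ := hcl.exists_isLeast ⟨m, hm, rfl⟩
  have hzm : d z = d m := hzm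
  have hpz : p < z := lt_of_le_of_ne hz.1 (by rintro rfl; linarith)
  have hzq : z < q := lt_of_le_of_ne hz.2 (by rintro rfl; linarith)
  have h1 : f p < f z := hf ⟨le_rfl, hpq⟩ hz hpz
  have h2 : f z < f q := hf hz ⟨hpq, le_rfl⟩ hzq
  obtain ⟨δ, hδ, hδ1, hδ2⟩ : ∃ δ > 0, δ ≤ f z - f p ∧ δ ≤ f q - f z :=
    ⟨min (f z - f p) (f q - f z), by simp [h1, h2], min_le_left _ _, min_le_right _ _⟩
  obtain ⟨u, hu, hfu⟩ : ∃ u ∈ Icc p z, f u = f z - δ :=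
    intermediate_value_Icc hpz.le (hfc.mono (Icc_subset_Icc_right hz.2))
      ⟨by linarith, by linarith⟩
  obtain ⟨v, hv, hfv⟩ : ∃ v ∈ Icc z q, f v = f z + δ :=
    intermediate_value_Icc hzq.le (hfc.mono (Icc_subset_Icc_left hz.1))
      ⟨by linarith, by linarith⟩
  have huz : u < z := lt_of_le_of_ne hu.2 (by rintro rfl; linarith)
  have hu' : u ∈ Icc p q := ⟨hu.1, hu.2.trans hz.2⟩
  have hv' : v ∈ Icc p q := ⟨hz.1.trans hv.1, hv.2⟩
  obtain ⟨k, rfl⟩ : ∃ k, n = k + 2 := ⟨n - 2, by omega⟩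
  let y : Fin (k + 2) → ℝ := Fin.cons u (Fin.cons v fun _ => z)
  have hy : ∀ i, y i ∈ Icc p q := by
    intro i
    refine Fin.cases ?_ (fun j => Fin.cases ?_ (fun l => ?_) j) i <;>
      simp only [y, Fin.cons_zero, Fin.cons_succ] <;> assumption
  have hsum : ∀ g : ℝ → ℝ, ∑ i, g (y i) = g u + (g v + k * g z) := by
    intro g
    simp [Fin.sum_univ_succ, y]
  have hMy : M y = z := by
    refine hf.injOn (hM y hy) hz ?_
    rw [hfM y hy, hsum, hfu, hfv]
    push_cast at hn0 ⊢
    field_simp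
    ring
  have hdz := hdM y hy
  rw [hMy, hsum] at hdz
  have hdu : d u < d m := lt_of_le_of_ne (hmax' u hu') fun h => by
    have := hzleast ⟨hu', h⟩
    linarith
  have hdv := hmax' v hv'
  push_cast at hn0 hdz
  field_simp at hdz
  rw [hzm] at hdz
  linarith

/-- Two generators of the same quasi-arithmetic mean agree up to an affine map on a compact
interval. The second one, `k`, is only assumed continuous. -/
lemma affine_on_Icc {n : ℕ} (hn : 2 ≤ n) {M : (Fin n → ℝ) → ℝ} {f k : ℝ → ℝ} {p q : ℝ}
    (hpq : p < q) (hfc : ContinuousOn f (Icc p q)) (hf : StrictMonoOn f (Icc p q))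
    (hkc : ContinuousOn k (Icc p q))
    (hM : ∀ x : Fin n → ℝ, (∀ i, x i ∈ Icc p q) → M x ∈ Icc p q)
    (hfM : ∀ x : Fin n → ℝ, (∀ i, x i ∈ Icc p q) → f (M x) = (1 / (n : ℝ)) * ∑ i, f (x i))
    (hkM : ∀ x : Fin n → ℝ, (∀ i, x i ∈ Icc p q) → k (M x) = (1 / (n : ℝ)) * ∑ i, k (x i)) :
    ∃ a b, ∀ x ∈ Icc p q, k x = a * f x + b := by
  have hn0 : (n : ℝ) ≠ 0 := by positivity
  have hne : f q - f p ≠ 0 :=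
    sub_ne_zero.2 (hf ⟨le_rfl, hpq.le⟩ ⟨hpq.le, le_rfl⟩ hpq).ne'
  obtain ⟨a, ha⟩ : ∃ a, a * (f q - f p) = k q - k p :=
    ⟨(k q - k p) / (f q - f p), by field_simp⟩
  obtain ⟨b, hb⟩ : ∃ b, b = k p - a * f p := ⟨_, rfl⟩
  have key : ∀ x : Fin n → ℝ, (∀ i, x i ∈ Icc p q) →
      k (M x) - (a * f (M x) + b) = (1 / (n : ℝ)) * ∑ i, (k (x i) - (a * f (x i) + b)) := by
    intro x hx
    rw [hfM x hx, hkM x hx, Finset.sum_sub_distrib, Finset.sum_add_distrib, ← Finset.mul_sum]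
    simp
    field_simp
  refine ⟨a, b, fun x hx => ?_⟩
  have h1 := le_zero_of_mean hn (d := fun x => k x - (a * f x + b)) hfc hf (by fun_prop) hM hfM key
    (by linarith) (by linarith) x hx
  have h2 := le_zero_of_mean hn (d := fun x => -(k x - (a * f x + b))) hfc hf (by fun_prop) hM hfM
    (fun x hx => by rw [key x hx, Finset.sum_neg_distrib, mul_neg])
    (by linarith) (by linarith) x hx
  linarith

/-- A quasi-arithmetic mean of points of `[p, q] ⊆ E` lies in `[p, q]`. -/
lemma mean_mem_Icc {n : ℕ} (hn : 2 ≤ n) {M : (Fin n → ℝ) → ℝ} {f : ℝ → ℝ} {E : Set ℝ} {p q : ℝ}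
    (hE : E.OrdConnected) (hp : p ∈ E) (hq : q ∈ E) (hf : StrictMonoOn f E)
    (hM : ∀ x : Fin n → ℝ, (∀ i, x i ∈ E) → M x ∈ E)
    (hfM : ∀ x : Fin n → ℝ, (∀ i, x i ∈ E) → f (M x) = (1 / (n : ℝ)) * ∑ i, f (x i))
    (x : Fin n → ℝ) (hx : ∀ i, x i ∈ Icc p q) : M x ∈ Icc p q := by
  have hxE : ∀ i, x i ∈ E := fun i => hE.out hp hq (hx i)
  have hn0 : (0 : ℝ) < n := by positivity
  have h1 : ∑ _i : Fin n, f p ≤ ∑ i, f (x i) :=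
    Finset.sum_le_sum fun i _ => hf.monotoneOn hp (hxE i) (hx i).1
  have h2 : ∑ i, f (x i) ≤ ∑ _i : Fin n, f q :=
    Finset.sum_le_sum fun i _ => hf.monotoneOn (hxE i) hq (hx i).2
  simp only [Finset.sum_const, Finset.card_univ, Fintype.card_fin, nsmul_eq_mul] at h1 h2
  have h3 := hfM x hxE
  rw [one_div, ← div_eq_inv_mul, eq_div_iff hn0.ne'] at h3
  constructor
  · refine (hf.le_iff_le hp (hM x hxE)).1 ?_
    nlinarith
  · refine (hf.le_iff_le (hM x hxE) hq).1 ?_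
    nlinarith

lemma affine_on {n : ℕ} (hn : 2 ≤ n) {M : (Fin n → ℝ) → ℝ} {f k : ℝ → ℝ} {J : Set ℝ}
    (hJ : J.OrdConnected) (hfc : ContinuousOn f J) (hf : StrictMonoOn f J)
    (hkc : ContinuousOn k J)
    (hM : ∀ x : Fin n → ℝ, (∀ i, x i ∈ J) → M x ∈ J)
    (hfM : ∀ x : Fin n → ℝ, (∀ i, x i ∈ J) → f (M x) = (1 / (n : ℝ)) * ∑ i, f (x i))
    (hkM : ∀ x : Fin n → ℝ, (∀ i, x i ∈ J) → k (M x) = (1 / (n : ℝ)) * ∑ i, k (x i)) :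
    ∃ a b, ∀ x ∈ J, k x = a * f x + b := by
  have key : ∀ p ∈ J, ∀ q ∈ J, p < q → ∃ a b, ∀ x ∈ Icc p q, k x = a * f x + b := by
    intro p hp q hq hpq
    have hs : Icc p q ⊆ J := hJ.out hp hq
    exact affine_on_Icc hn hpq (hfc.mono hs) (hf.mono hs) (hkc.mono hs)
      (mean_mem_Icc hn hJ hp hq hf hM hfM)
      (fun x hx => hfM x fun i => hs (hx i)) (fun x hx => hkM x fun i => hs (hx i))
  rcases J.subsingleton_or_nontrivial with hs | hnt
  · rcases J.eq_empty_or_nonempty with rfl | ⟨c, hc⟩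
    · exact ⟨0, 0, by simp⟩
    · exact ⟨0, k c, fun x hx => by rw [hs hx hc]; ring⟩
  · obtain ⟨p, hp, q, hq, hpq⟩ := hnt.exists_lt
    obtain ⟨a, b, hab⟩ := key p hp q hq hpq
    refine ⟨a, b, fun x hx => ?_⟩
    have hl : min p x ∈ J := by rcases min_choice p x with h | h <;> rw [h] <;> assumption
    have hr : max q x ∈ J := by rcases max_choice q x with h | h <;> rw [h] <;> assumption
    obtain ⟨a', b', hab'⟩ := key _ hl _ hr
      ((min_le_left _ _).trans_lt (hpq.trans_le (le_max_left _ _)))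
    have e1 := hab p ⟨le_rfl, hpq.le⟩
    have e2 := hab q ⟨hpq.le, le_rfl⟩
    have e3 := hab' p ⟨min_le_left _ _, hpq.le.trans (le_max_left _ _)⟩
    have e4 := hab' q ⟨(min_le_left _ _).trans hpq.le, le_max_left _ _⟩
    have e5 := hab' x ⟨min_le_right _ _, le_max_right _ _⟩
    have hlt := hf hp hq hpq
    have ha : a' = a := by
      have : (a' - a) * (f q - f p) = 0 := by linarith
      rcases mul_eq_zero.1 this with h | h <;> linarith
    subst ha
    linarith

/-- A solution of the scaling equation that is monotone on an open set is differentiable there: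
by Lebesgue's theorem it is so at some point, and dilations carry this point to any other. -/
lemma differentiableAt_of_scaling {f : ℝ → ℝ} {U : Set ℝ} (hU : IsOpen U)
    (hpos : U ⊆ Ioi 0) (hf : MonotoneOn f U)
    (H : ∀ r : ℝ, 0 < r → ∃ a b, ∀ x ∈ U, r * x ∈ U → f (r * x) = a * f x + b) :
    ∀ y ∈ U, DifferentiableAt ℝ f y := by
  intro y hy
  obtain ⟨x, hx, hdx⟩ : ∃ x ∈ U, DifferentiableAt ℝ f x := by
    by_contra! hcon
    have hae := hf.ae_differentiableWithinAt_of_mem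
    have hnull : MeasureTheory.volume U = 0 := by
      refine MeasureTheory.measure_mono_null (fun x hx => ?_) hae
      simp only [mem_compl_iff, mem_ofPred_eq, Classical.not_imp]
      exact ⟨hx, fun h => hcon x hx (h.differentiableAt (hU.mem_nhds hx))⟩
    exact (hU.measure_pos MeasureTheory.volume ⟨y, hy⟩).ne' hnull
  have hx0 : 0 < x := hpos hx
  have hy0 : 0 < y := hpos hy
  obtain ⟨a, b, hab⟩ := H (y / x) (by positivity)
  have hyx : x / y * y = x := by field_simp
  have hev : ∀ᶠ z in 𝓝 y, f z = a * f (x / y * z) + b := by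
    have hc : ContinuousAt (fun z : ℝ => x / y * z) y := by fun_prop
    have h1 : ∀ᶠ z in 𝓝 y, x / y * z ∈ U := hc (hU.mem_nhds (by simpa only [hyx] using hx))
    filter_upwards [h1, hU.mem_nhds hy] with z hz1 hz2
    have hz : y / x * (x / y * z) = z := by field_simp
    have := hab _ hz1 (by rwa [hz])
    rwa [hz] at this
  have hd : DifferentiableAt ℝ (fun z => f (x / y * z)) y := by
    refine DifferentiableAt.comp (g := f) (f := fun z => x / y * z) y (by rwa [hyx]) (by fun_prop)
  exact ((hd.const_mul a).add_const b).congr_of_eventuallyEq hev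

/-- Differentiating the scaling equation at `r = 1`, after elimination of its coefficients, yields a
first-order linear differential equation. -/
lemma euler_equation {f : ℝ → ℝ} {U : Set ℝ} (hU : IsOpen U) (hpos : U ⊆ Ioi 0)
    (hf : StrictMonoOn f U) (hnt : U.Nontrivial)
    (H : ∀ r : ℝ, 0 < r → ∃ a b, ∀ x ∈ U, r * x ∈ U → f (r * x) = a * f x + b) :
    ∃ A B, ∀ x ∈ U, HasDerivAt f ((A * f x + B) / x) x := by
  have hd := differentiableAt_of_scaling hU hpos hf.monotoneOn H
  obtain ⟨p, hp, q, hq, hpq⟩ := hnt.exists_lt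
  have hne : f q - f p ≠ 0 := sub_ne_zero.2 (hf hp hq hpq).ne'
  have hdr : ∀ x ∈ U, HasDerivAt (fun r => f (r * x)) (deriv f x * x) 1 := by
    intro x hx
    have h1 : HasDerivAt (fun r : ℝ => r * x) x 1 := by
      simpa using (hasDerivAt_id (1 : ℝ)).mul_const x
    have h2 : HasDerivAt f (deriv f x) (1 * x) := by
      simpa using (hd x hx).hasDerivAt
    exact HasDerivAt.comp (h₂ := f) (h := fun r => r * x) 1 h2 h1
  have hmem : ∀ x ∈ U, ∀ᶠ r in 𝓝 (1 : ℝ), r * x ∈ U := by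
    intro x hx
    have hc : ContinuousAt (fun r : ℝ => r * x) 1 := by fun_prop
    exact hc (hU.mem_nhds (by simpa using hx))
  have key : ∀ x ∈ U, (deriv f x * x - deriv f p * p) * (f q - f p) =
      (deriv f q * q - deriv f p * p) * (f x - f p) := by
    intro x hx
    have e1 := ((hdr x hx).sub (hdr p hp)).mul_const (f q - f p)
    have e2 := ((hdr q hq).sub (hdr p hp)).mul_const (f x - f p)
    refine e1.unique (e2.congr_of_eventuallyEq ?_)
    filter_upwards [hmem x hx, hmem p hp, hmem q hq, lt_mem_nhds (zero_lt_one (α := ℝ))]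
      with r h1 h2 h3 h4
    obtain ⟨a, b, hab⟩ := H r h4
    simp only [Pi.sub_apply]
    rw [hab x hx h1, hab p hp h2, hab q hq h3]
    ring
  refine ⟨(deriv f q * q - deriv f p * p) / (f q - f p),
    deriv f p * p - (deriv f q * q - deriv f p * p) / (f q - f p) * f p, fun x hx => ?_⟩
  have hx0 : x ≠ 0 := (hpos hx).ne'
  refine (hd x hx).hasDerivAt.congr_deriv ?_
  have := key x hx
  field_simp
  linarith

/-- The strictly increasing solutions of the scaling equation are logarithmic or power
functions. -/
lemma solve_scaling {f : ℝ → ℝ} {U : Set ℝ} (hU : IsOpen U) (hUc : IsPreconnected U)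
    (hpos : U ⊆ Ioi 0) (hf : StrictMonoOn f U) (hnt : U.Nontrivial)
    (H : ∀ r : ℝ, 0 < r → ∃ a b, ∀ x ∈ U, r * x ∈ U → f (r * x) = a * f x + b) :
    (∃ C D, ∀ x ∈ U, f x = C * Real.log x + D) ∨
      ∃ α : ℝ, α ≠ 0 ∧ ∃ C D, ∀ x ∈ U, f x = C * x ^ α + D := by
  obtain ⟨A, B, hAB⟩ := euler_equation hU hpos hf hnt H
  have hconst : ∀ g : ℝ → ℝ, (∀ x ∈ U, HasDerivAt g 0 x) → ∃ c, ∀ x ∈ U, g x = c := by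
    intro g hg
    obtain ⟨c, hc⟩ := hU.exists_is_const_of_deriv_eq_zero hUc
      (fun x hx => (hg x hx).differentiableAt.differentiableWithinAt)
      (fun x hx => (hg x hx).deriv)
    exact ⟨c, hc⟩
  by_cases hA : A = 0
  · left
    obtain ⟨c, hc⟩ := hconst (fun x => f x - B * Real.log x) fun x hx => by
      have hx0 : x ≠ 0 := (hpos hx).ne'
      refine ((hAB x hx).sub ((Real.hasDerivAt_log hx0).const_mul B)).congr_deriv ?_
      rw [hA]; field_simp; ring
    exact ⟨B, c, fun x hx => by have := hc x hx; linarith⟩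
  · right
    -- The integrating factor of `x * f' = A * f + B` is `x ^ (-A)`.
    obtain ⟨c, hc⟩ := hconst (fun x => (f x + B / A) * x ^ (-A)) fun x hx => by
      have hx0 : x ≠ 0 := (hpos hx).ne'
      refine (((hAB x hx).add_const (B / A)).mul
        (Real.hasDerivAt_rpow_const (p := -A) (Or.inl hx0))).congr_deriv ?_
      rw [Real.rpow_sub_one hx0]; field_simp; ring
    refine ⟨A, hA, c, -(B / A), fun x hx => ?_⟩
    have hx0 : 0 < x := hpos hx
    have h := hc x hx
    rw [← h, mul_assoc, ← Real.rpow_add hx0]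
    simp

/-- A generator may be replaced by `F` when it equals `C * F + D`. -/
lemma mean_of_affine {n : ℕ} (hn : 2 ≤ n) {M : (Fin n → ℝ) → ℝ} {f F : ℝ → ℝ} {E : Set ℝ}
    {C D : ℝ} (hf : StrictMonoOn f E) (hnt : E.Nontrivial)
    (hM : ∀ x : Fin n → ℝ, (∀ i, x i ∈ E) → M x ∈ E)
    (hfM : ∀ x : Fin n → ℝ, (∀ i, x i ∈ E) → f (M x) = (1 / (n : ℝ)) * ∑ i, f (x i))
    (hF : ∀ x ∈ E, f x = C * F x + D) (x : Fin n → ℝ) (hx : ∀ i, x i ∈ E) :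
    F (M x) = (1 / (n : ℝ)) * ∑ i, F (x i) := by
  have hn0 : (n : ℝ) ≠ 0 := by positivity
  have hC : C ≠ 0 := by
    rintro rfl
    obtain ⟨p, hp, q, hq, hpq⟩ := hnt.exists_lt
    have := hf hp hq hpq
    rw [hF p hp, hF q hq] at this
    simp at this
  have h := hfM x hx
  rw [hF _ (hM x hx), Finset.sum_congr rfl fun i _ => hF _ (hx i), Finset.sum_add_distrib,
    ← Finset.mul_sum] at h
  simp only [Finset.sum_const, Finset.card_univ, Fintype.card_fin, nsmul_eq_mul] at h
  field_simp at h ⊢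
  exact mul_left_cancel₀ hC (by linarith)

/-- The forward implication for an increasing generator on a nondegenerate interval. -/
lemma forward_of_strictMono (E : Set ℝ) (hE : E.OrdConnected) (hEpos : E ⊆ Ioi (0 : ℝ))
    (n : ℕ) (hn : 2 ≤ n) (M : (Fin n → ℝ) → ℝ)
    (hM : ∀ x : Fin n → ℝ, (∀ i, x i ∈ E) → M x ∈ E) (hnt : E.Nontrivial)
    (f : ℝ → ℝ) (hfc : ContinuousOn f E) (hf : StrictMonoOn f E)
    (hfM : ∀ x : Fin n → ℝ, (∀ i, x i ∈ E) → f (M x) = (1 / (n : ℝ)) * ∑ i, f (x i))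
    (hhom : ∀ r : ℝ, 0 < r → ∀ x : Fin n → ℝ, (∀ i, x i ∈ E) → (∀ i, r * x i ∈ E) →
        M (fun i => r * x i) = r * M x) :
    ((∀ x : Fin n → ℝ, (∀ i, x i ∈ E) → M x = (∏ i, x i) ^ (1 / (n : ℝ))) ∨
     (∃ α : ℝ, α ≠ 0 ∧ ∀ x : Fin n → ℝ, (∀ i, x i ∈ E) →
        M x = ((1 / (n : ℝ)) * ∑ i, (x i) ^ α) ^ (1 / α))) := by
  have H : ∀ r : ℝ, 0 < r → ∃ a b, ∀ x ∈ E, r * x ∈ E → f (r * x) = a * f x + b := by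
    intro r hr
    have hJ : (E ∩ (fun x => r * x) ⁻¹' E).OrdConnected :=
      hE.inter (hE.preimage_mono fun x y hxy => mul_le_mul_of_nonneg_left hxy hr.le)
    obtain ⟨a, b, hab⟩ := affine_on hn (M := M) (f := f) (k := fun x => f (r * x)) hJ
      (hfc.mono inter_subset_left) (hf.mono inter_subset_left)
      (hfc.comp (by fun_prop) fun x hx => hx.2)
      (fun x hx => ⟨hM x fun i => (hx i).1, by
        rw [mem_preimage, ← hhom r hr x (fun i => (hx i).1) fun i => (hx i).2]
        exact hM _ fun i => (hx i).2⟩)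
      (fun x hx => hfM x fun i => (hx i).1)
      (fun x hx => by
        rw [← hhom r hr x (fun i => (hx i).1) fun i => (hx i).2]
        exact hfM _ fun i => (hx i).2)
    exact ⟨a, b, fun x hx hrx => hab x ⟨hx, hrx⟩⟩
  have hsub : interior E ⊆ E := interior_subset
  obtain ⟨p, hp, q, hq, hpq⟩ := hnt.exists_lt
  have hIoo : Ioo p q ⊆ interior E :=
    interior_maximal (Ioo_subset_Icc_self.trans (hE.out hp hq)) isOpen_Ioo
  have hne : (interior E).Nonempty := (nonempty_Ioo.2 hpq).mono hIoo
  have hconv : Convex ℝ E := hE.convex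
  have hcl : E ⊆ closure (interior E) := by
    rw [hconv.closure_interior_eq_closure_of_nonempty_interior hne]
    exact subset_closure
  have hn0 : (n : ℝ) ≠ 0 := by positivity
  rcases solve_scaling isOpen_interior hconv.interior.isPreconnected (hsub.trans hEpos)
      (hf.mono hsub) ((Ioo_infinite hpq).nontrivial.mono hIoo)
      (fun r hr => (H r hr).imp fun a => Exists.imp fun b hab x hx hrx =>
        hab x (hsub hx) (hsub hrx)) with ⟨C, D, h⟩ | ⟨α, hα, C, D, h⟩
  · left
    have hc : ContinuousOn (fun x => C * Real.log x + D) E :=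
      ((Real.continuousOn_log.mono fun x hx => (hEpos hx).ne').const_mul C |>.add
        continuousOn_const)
    have h' : EqOn f (fun x => C * Real.log x + D) E :=
      EqOn.of_subset_closure h hfc hc hsub hcl
    intro x hx
    have hm := mean_of_affine hn hf hnt hM hfM h' x hx
    have hx0 : ∀ i, 0 < x i := fun i => hEpos (hx i)
    have hMx : 0 < M x := hEpos (hM x hx)
    rw [Real.rpow_def_of_pos (Finset.prod_pos fun i _ => hx0 i),
      Real.log_prod fun i _ => (hx0 i).ne', mul_comm, ← hm, Real.exp_log hMx]
  · right
    have hc : ContinuousOn (fun x => C * x ^ α + D) E :=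
      fun x hx => (((Real.continuousAt_rpow_const x α (Or.inl (hEpos hx).ne')).const_mul C).add
        continuousAt_const).continuousWithinAt
    have h' : EqOn f (fun x => C * x ^ α + D) E :=
      EqOn.of_subset_closure h hfc hc hsub hcl
    refine ⟨α, hα, fun x hx => ?_⟩
    have hm := mean_of_affine (F := fun x => x ^ α) hn hf hnt hM hfM h' x hx
    have hMx : 0 < M x := hEpos (hM x hx)
    rw [← hm, ← Real.rpow_mul hMx.le, mul_one_div_cancel hα, Real.rpow_one]

/-- **Nagumo's theorem, ratio-scale case.**
Let `E ⊆ (0,∞)` be a real interval and `n ≥ 2`. A quasi-arithmetic mean `M : Eⁿ → E`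
is meaningful for the same input-output ratio scales (`M(r·x) = r·M(x)` for `r > 0`)
iff `M` is the geometric mean or a root-mean-power. -/
theorem nagumo_ratio_scales
    (E : Set ℝ) (hE : E.OrdConnected) (hEpos : E ⊆ Set.Ioi (0 : ℝ))
    (n : ℕ) (hn : 2 ≤ n) (M : (Fin n → ℝ) → ℝ)
    (hMmaps : ∀ x : Fin n → ℝ, (∀ i, x i ∈ E) → M x ∈ E)
    (hQA : ∃ f : ℝ → ℝ, ContinuousOn f E ∧ (StrictMonoOn f E ∨ StrictAntiOn f E) ∧
      ∀ x : Fin n → ℝ, (∀ i, x i ∈ E) → f (M x) = (1 / (n : ℝ)) * ∑ i, f (x i)) :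
    (∀ r : ℝ, 0 < r → ∀ x : Fin n → ℝ, (∀ i, x i ∈ E) → (∀ i, r * x i ∈ E) →
        M (fun i => r * x i) = r * M x) ↔
    ((∀ x : Fin n → ℝ, (∀ i, x i ∈ E) → M x = (∏ i, x i) ^ (1 / (n : ℝ))) ∨
     (∃ α : ℝ, α ≠ 0 ∧ ∀ x : Fin n → ℝ, (∀ i, x i ∈ E) →
        M x = ((1 / (n : ℝ)) * ∑ i, (x i) ^ α) ^ (1 / α))) := by
  have hn0 : (n : ℝ) ≠ 0 := by positivity
  constructor
  · intro hhom
    rcases E.subsingleton_or_nontrivial with hs | hnt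
    · left
      intro x hx
      have hMx : 0 < M x := hEpos (hMmaps x hx)
      rw [Finset.prod_congr rfl fun i _ => hs (hx i) (hMmaps x hx)]
      rw [Finset.prod_const, Finset.card_univ, Fintype.card_fin, ← Real.rpow_natCast,
        ← Real.rpow_mul hMx.le, mul_one_div_cancel hn0, Real.rpow_one]
    · obtain ⟨f, hfc, hf | hf, hfM⟩ := hQA
      · exact forward_of_strictMono E hE hEpos n hn M hMmaps hnt f hfc hf hfM hhom
      · refine forward_of_strictMono E hE hEpos n hn M hMmaps hnt (fun x => -f x) hfc.neg
          (fun x hx y hy hxy => neg_lt_neg (hf hx hy hxy)) (fun x hx => ?_) hhom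
        rw [hfM x hx, Finset.sum_neg_distrib, mul_neg]
  · rintro (h | ⟨α, hα, h⟩) r hr x hx hrx
    · have hx0 : ∀ i, 0 < x i := fun i => hEpos (hx i)
      rw [h _ hrx, h x hx, Finset.prod_mul_distrib, Finset.prod_const, Finset.card_univ,
        Fintype.card_fin, Real.mul_rpow (by positivity) (Finset.prod_nonneg fun i _ => (hx0 i).le),
        ← Real.rpow_natCast, ← Real.rpow_mul hr.le, mul_one_div_cancel hn0, Real.rpow_one]
    · have hx0 : ∀ i, 0 < x i := fun i => hEpos (hx i)
      rw [h _ hrx, h x hx, Finset.sum_congr rfl fun i _ => Real.mul_rpow hr.le (hx0 i).le,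
        ← Finset.mul_sum, mul_left_comm, Real.mul_rpow (by positivity)
          (mul_nonneg (by positivity)
            (Finset.sum_nonneg fun i _ => Real.rpow_nonneg (hx0 i).le _)),
        ← Real.rpow_mul hr.le, mul_one_div_cancel hα, Real.rpow_one]
end

section
/- Let E ⊆ ℝ be a real interval with nonempty interior and n ≥ 2. A quasi-arithmetic mean M : Eⁿ → E (i.e., M(x) = f⁻¹((1/n)∑ f(xᵢ)) for some continuous strictly monotonic f : E → ℝ) satisfies M(r·x₁+s,…,r·xₙ+s) = r·M(x₁,…,xₙ)+s for all r > 0 and s ∈ ℝ such that r·x+s ∈ Eⁿ, if and only if M is the arithmetic mean M(x) = (1/n) ∑_{i=1}^n xᵢ. -/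
/-!
Interval-scale invariance carries any two-point configuration `(b, a, …, a)` with `a < b` to any
other one, so there is a single ratio `θ ∈ (0, 1)` with
`f (a + θ (b - a)) = ((n - 1) f a + f b) / n` for all `a < b` in `E` (`exists_ratio`).

Being monotone, `f` is differentiable at some interior point `p` (Lebesgue). Iterating the
functional equation towards `p` from the right and from the left gives
`f (p + θ ^ k h) - f p = (1 / n) ^ k (f (p + h) - f p)` for `h > 0` and
`f (p + (1 - θ) ^ k h) - f p = (1 - 1 / n) ^ k (f (p + h) - f p)` for `h < 0`.
Boundedness of the difference quotients at `p` forces `1 / n ≤ θ` and `1 - 1 / n ≤ 1 - θ`, so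
`θ = 1 / n`; the difference quotients are then constant along both sequences, so they equal
the derivative at `p`, and `f` is affine on `E` (`affine_of_ratio`). An affine generator yields the
arithmetic mean.
-/

open Filter Topology

/-- If the increments of `g` along `p + q ^ k * h` are geometric with ratio `c`, then
differentiability of `g` at `p` prevents `c` from exceeding `q`, and `c = q` determines the
increments from the derivative. -/
lemma geometric_increments {g : ℝ → ℝ} {D p q c h C : ℝ} (hg : HasDerivAt g D p)
    (hq0 : 0 < q) (hq1 : q < 1) (hh : h ≠ 0) (hC : C ≠ 0)
    (hk : ∀ k : ℕ, g (p + q ^ k * h) - g p = c ^ k * C) :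
    c ≤ q ∧ (c = q → C = D * h) := by
  have hseq : Tendsto (fun k : ℕ => p + q ^ k * h) atTop (𝓝[≠] p) := by
    rw [tendsto_nhdsWithin_iff]
    constructor
    · have := ((tendsto_pow_atTop_nhds_zero_of_lt_one hq0.le hq1).mul_const h).const_add p
      simpa using this
    · refine Eventually.of_forall fun k => ?_
      have : q ^ k * h ≠ 0 := mul_ne_zero (pow_pos hq0 k).ne' hh
      simpa using this
  have hlim : Tendsto (fun k : ℕ => (c / q) ^ k * (C / h)) atTop (𝓝 D) := by
    refine ((hasDerivAt_iff_tendsto_slope.1 hg).comp hseq).congr fun k => ?_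
    have hqk := (pow_pos hq0 k).ne'
    simp only [Function.comp, slope_def_field, hk, div_pow]
    rw [add_sub_cancel_left]
    field_simp
  have hCh : C / h ≠ 0 := div_ne_zero hC hh
  constructor
  · by_contra! hlt
    have h1 : 1 < c / q := (one_lt_div hq0).2 hlt
    have hpow : Tendsto (fun k : ℕ => (c / q) ^ k) atTop (𝓝 (D / (C / h))) := by
      refine (hlim.div_const (C / h)).congr fun k => ?_
      field_simp
    exact not_tendsto_nhds_of_tendsto_atTop (tendsto_pow_atTop_atTop_of_one_lt h1) _ hpow
  · rintro rfl
    have : C / h = D := by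
      refine tendsto_nhds_unique ?_ hlim
      simp [div_self hq0.ne']
    rw [← this]
    field_simp

/-- Invariance under positive affine maps makes the relative position of the mean of
`(b, a, …, a)` in `[a, b]` independent of `a < b`. -/
lemma exists_ratio {E : Set ℝ} {n : ℕ} (hn : 2 ≤ n) {M : (Fin n → ℝ) → ℝ}
    (hMmaps : ∀ x : Fin n → ℝ, (∀ i, x i ∈ E) → M x ∈ E) {f : ℝ → ℝ} (hf : StrictMonoOn f E)
    (hfM : ∀ x : Fin n → ℝ, (∀ i, x i ∈ E) → f (M x) = (1 / (n : ℝ)) * ∑ i, f (x i))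
    (hinv : ∀ (r s : ℝ), 0 < r → ∀ x : Fin n → ℝ, (∀ i, x i ∈ E) → (∀ i, r * x i + s ∈ E) →
        M (fun i => r * x i + s) = r * M x + s)
    {a₀ b₀ : ℝ} (ha₀ : a₀ ∈ E) (hb₀ : b₀ ∈ E) (hab₀ : a₀ < b₀) :
    ∃ θ : ℝ, 0 < θ ∧ θ < 1 ∧ ∀ a ∈ E, ∀ b ∈ E, a < b →
      f (a + θ * (b - a)) = f a + (1 / (n : ℝ)) * (f b - f a) := by
  have hn0 : (0 : ℝ) < n := by exact_mod_cast (by omega : 0 < n)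
  have hn1 : (1 : ℝ) < n := by exact_mod_cast (by omega : 1 < n)
  let i₀ : Fin n := ⟨0, by omega⟩
  let X : ℝ → ℝ → Fin n → ℝ := fun a b i => if i = i₀ then b else a
  have hX : ∀ a ∈ E, ∀ b ∈ E, ∀ i, X a b i ∈ E := by
    intro a ha b hb i
    by_cases h : i = i₀ <;> simp [X, h, ha, hb]
  have hfX : ∀ a ∈ E, ∀ b ∈ E, f (M (X a b)) = f a + (1 / (n : ℝ)) * (f b - f a) := by
    intro a ha b hb
    rw [hfM _ (hX a ha b hb)]
    have : ∀ i, f (X a b i) = f a + if i = i₀ then f b - f a else 0 := by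
      intro i
      by_cases h : i = i₀ <;> simp [X, h]
    simp only [this, Finset.sum_add_distrib, Finset.sum_ite_eq', Finset.mem_univ, if_true,
      Finset.sum_const, Finset.card_univ, Fintype.card_fin, nsmul_eq_mul]
    field_simp
  have hd : 0 < b₀ - a₀ := sub_pos.2 hab₀
  have hM₀ := hMmaps _ (hX a₀ ha₀ b₀ hb₀)
  have hf₀ := hfX a₀ ha₀ b₀ hb₀
  have hfd : 0 < f b₀ - f a₀ := sub_pos.2 (hf ha₀ hb₀ hab₀)
  have hinvn : 1 / (n : ℝ) < 1 := (div_lt_one hn0).2 hn1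
  have hlow : a₀ < M (X a₀ b₀) := by
    rw [← hf.lt_iff_lt ha₀ hM₀, hf₀]
    have : 0 < 1 / (n : ℝ) * (f b₀ - f a₀) := by positivity
    linarith
  have hupp : M (X a₀ b₀) < b₀ := by
    rw [← hf.lt_iff_lt hM₀ hb₀, hf₀]
    nlinarith
  refine ⟨(M (X a₀ b₀) - a₀) / (b₀ - a₀), div_pos (by linarith) hd,
    (div_lt_one hd).2 (by linarith), ?_⟩
  intro a ha b hb hab
  -- the affine map sending `(a₀, b₀)` to `(a, b)`
  have hr : 0 < (b - a) / (b₀ - a₀) := div_pos (by linarith) hd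
  have hmap : (fun i => (b - a) / (b₀ - a₀) * X a₀ b₀ i + (a - (b - a) / (b₀ - a₀) * a₀))
      = X a b := by
    funext i
    by_cases h : i = i₀
    · simp only [X, h, if_true]
      field_simp
      ring
    · simp [X, h]
  have key := hinv _ (a - (b - a) / (b₀ - a₀) * a₀) hr (X a₀ b₀) (hX a₀ ha₀ b₀ hb₀)
    (fun i => by
      have := congrFun hmap i
      rw [this]
      exact hX a ha b hb i)
  rw [hmap] at key
  rw [← hfX a ha b hb, key]
  congr 1
  field_simp
  ring

/-- A strictly increasing function taking, on every `[a, b] ⊆ E`, the value with weights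
`1 - 1 / n`, `1 / n` at one and the same relative position `θ` is affine on `E`. -/
lemma affine_of_ratio {E : Set ℝ} (hE : E.OrdConnected) (hEint : (interior E).Nonempty)
    {n : ℕ} {f : ℝ → ℝ} (hf : StrictMonoOn f E) {θ : ℝ} (hθ0 : 0 < θ) (hθ1 : θ < 1)
    (hfθ : ∀ a ∈ E, ∀ b ∈ E, a < b →
      f (a + θ * (b - a)) = f a + (1 / (n : ℝ)) * (f b - f a)) :
    ∃ p D : ℝ, D ≠ 0 ∧ ∀ x ∈ E, f x = f p + D * (x - p) := by
  obtain ⟨p, hp, hdiff⟩ : ∃ p ∈ interior E, DifferentiableAt ℝ f p := by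
    have hae := hf.monotoneOn.ae_differentiableWithinAt_of_mem
    obtain ⟨p, hp, hpd⟩ := (MeasureTheory.Measure.dense_of_ae hae).inter_open_nonempty _
      isOpen_interior hEint
    exact ⟨p, hp, (hpd (interior_subset hp)).differentiableAt (mem_interior_iff_mem_nhds.1 hp)⟩
  have hD := hdiff.hasDerivAt
  set D := deriv f p
  have hpE := interior_subset hp
  -- points between `p` and `p + h`
  have hmem : ∀ h, p + h ∈ E → ∀ q : ℝ, 0 < q → q < 1 → ∀ k : ℕ, p + q ^ k * h ∈ E := by
    intro h hh q hq0 hq1 k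
    have h0 := pow_pos hq0 k
    have h1 : q ^ k ≤ 1 := pow_le_one₀ hq0.le hq1.le
    refine hE.uIcc_subset hpE hh ?_
    rw [Set.mem_uIcc]
    rcases le_total 0 h with hs | hs
    · left; constructor <;> nlinarith
    · right; constructor <;> nlinarith
  have hne : ∀ h, h ≠ 0 → p + h ∈ E → f (p + h) - f p ≠ 0 := by
    intro h h0 hh h'
    have := hf.injOn hh hpE (sub_eq_zero.1 h')
    exact h0 (by linarith)
  have hright : ∀ h, 0 < h → p + h ∈ E →
      1 / (n : ℝ) ≤ θ ∧ (1 / (n : ℝ) = θ → f (p + h) - f p = D * h) := by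
    intro h h0 hh
    refine geometric_increments hD hθ0 hθ1 h0.ne' (hne h h0.ne' hh) fun k => ?_
    induction k with
    | zero => simp
    | succ k ih =>
      have hpos : 0 < θ ^ k * h := by positivity
      have := hfθ p hpE _ (hmem h hh θ hθ0 hθ1 k) (by linarith)
      rw [ih] at this
      rw [show p + θ ^ (k + 1) * h = p + θ * (p + θ ^ k * h - p) by ring, this]
      ring
  have hleft : ∀ h, h < 0 → p + h ∈ E →
      1 - 1 / (n : ℝ) ≤ 1 - θ ∧ (1 - 1 / (n : ℝ) = 1 - θ → f (p + h) - f p = D * h) := by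
    intro h h0 hh
    have hη0 : 0 < 1 - θ := by linarith
    have hη1 : 1 - θ < 1 := by linarith
    refine geometric_increments hD hη0 hη1 h0.ne (hne h h0.ne hh) fun k => ?_
    induction k with
    | zero => simp
    | succ k ih =>
      have hneg : (1 - θ) ^ k * h < 0 := mul_neg_of_pos_of_neg (by positivity) h0
      have := hfθ _ (hmem h hh (1 - θ) hη0 hη1 k) p hpE (by linarith)
      rw [show p + (1 - θ) ^ (k + 1) * h
        = p + (1 - θ) ^ k * h + θ * (p - (p + (1 - θ) ^ k * h)) by ring, this]
      linear_combination (1 - 1 / (n : ℝ)) * ih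
  obtain ⟨ε, hε, hball⟩ := Metric.mem_nhds_iff.1 (mem_interior_iff_mem_nhds.1 hp)
  have hpr : p + ε / 2 ∈ E := hball (by
    rw [Metric.mem_ball, Real.dist_eq, abs_lt]; constructor <;> linarith)
  have hpl : p + -(ε / 2) ∈ E := hball (by
    rw [Metric.mem_ball, Real.dist_eq, abs_lt]; constructor <;> linarith)
  have hθ : 1 / (n : ℝ) = θ :=
    le_antisymm (hright _ (by linarith) hpr).1 (by linarith [(hleft _ (by linarith) hpl).1])
  refine ⟨p, D, ?_, ?_⟩
  · intro hD0
    have := (hright _ (by linarith) hpr).2 hθ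
    rw [hD0, zero_mul] at this
    exact hne _ (by linarith) hpr this
  · intro x hx
    have hxp : p + (x - p) = x := by ring
    rcases lt_trichotomy x p with h | h | h
    · have := (hleft (x - p) (by linarith) (by rwa [hxp])).2 (by rw [hθ])
      rw [hxp] at this
      linarith
    · simp [h]
    · have := (hright (x - p) (by linarith) (by rwa [hxp])).2 hθ
      rw [hxp] at this
      linarith

/-- **Nagumo's theorem, interval-scale case.**
Let `E` be a real interval with nonempty interior and `n ≥ 2`. A quasi-arithmetic mean
`M : Eⁿ → E` is meaningful for the same input-output interval scales
(`M(r·x + s) = r·M(x) + s` for `r > 0`, `s ∈ ℝ`) iff `M` is the arithmetic mean. -/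
theorem nagumo_interval_scales
    (E : Set ℝ) (hE : E.OrdConnected) (hEint : (interior E).Nonempty)
    (n : ℕ) (hn : 2 ≤ n) (M : (Fin n → ℝ) → ℝ)
    (hMmaps : ∀ x : Fin n → ℝ, (∀ i, x i ∈ E) → M x ∈ E)
    (hQA : ∃ f : ℝ → ℝ, ContinuousOn f E ∧ (StrictMonoOn f E ∨ StrictAntiOn f E) ∧
      ∀ x : Fin n → ℝ, (∀ i, x i ∈ E) → f (M x) = (1 / (n : ℝ)) * ∑ i, f (x i)) :
    (∀ (r s : ℝ), 0 < r → ∀ x : Fin n → ℝ, (∀ i, x i ∈ E) → (∀ i, r * x i + s ∈ E) →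
        M (fun i => r * x i + s) = r * M x + s) ↔
    (∀ x : Fin n → ℝ, (∀ i, x i ∈ E) → M x = (1 / (n : ℝ)) * ∑ i, x i) := by
  have hn0 : (n : ℝ) ≠ 0 := by exact_mod_cast (by omega : n ≠ 0)
  constructor
  · intro hinv
    -- a strictly decreasing generator may be replaced by its negative
    obtain ⟨f, hf, hfM⟩ : ∃ f : ℝ → ℝ, StrictMonoOn f E ∧
        ∀ x : Fin n → ℝ, (∀ i, x i ∈ E) → f (M x) = (1 / (n : ℝ)) * ∑ i, f (x i) := by
      obtain ⟨f, -, hf | hf, hfM⟩ := hQA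
      · exact ⟨f, hf, hfM⟩
      · refine ⟨fun x => -f x, fun a ha b hb hab => neg_lt_neg (hf ha hb hab), fun x hx => ?_⟩
        simp only [hfM x hx, Finset.sum_neg_distrib, mul_neg]
    obtain ⟨c, hc⟩ := hEint
    obtain ⟨ε, hε, hball⟩ := Metric.mem_nhds_iff.1 (mem_interior_iff_mem_nhds.1 hc)
    have hcE : c + ε / 2 ∈ E := hball (by
      rw [Metric.mem_ball, Real.dist_eq, abs_lt]; constructor <;> linarith)
    obtain ⟨θ, hθ0, hθ1, hfθ⟩ := exists_ratio hn hMmaps hf hfM hinv (interior_subset hc) hcE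
      (by linarith)
    obtain ⟨p, D, hD, haff⟩ := affine_of_ratio hE ⟨c, hc⟩ hf hθ0 hθ1 hfθ
    intro x hx
    have h := hfM x hx
    rw [haff _ (hMmaps x hx), Finset.sum_congr rfl fun i _ => haff _ (hx i)] at h
    simp only [Finset.sum_add_distrib, ← Finset.mul_sum, Finset.sum_sub_distrib,
      Finset.sum_const, Finset.card_univ, Fintype.card_fin, nsmul_eq_mul] at h
    field_simp at h
    field_simp
    apply mul_left_cancel₀ hD
    linear_combination h
  · intro hmean r s _ x hx hrx
    rw [hmean _ hrx, hmean x hx]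
    simp only [Finset.sum_add_distrib, ← Finset.mul_sum,
      Finset.sum_const, Finset.card_univ, Fintype.card_fin, nsmul_eq_mul]
    field_simp
end

section
/- Let E be a real interval with nonempty interior and n ≥ 2. A function M : Eⁿ → E is continuous, strictly increasing in each variable, idempotent, and bisymmetric if and only if there exist a continuous strictly monotonic function f : E → ℝ and real numbers ω₁,…,ωₙ > 0 with ∑_{i=1}^n ωᵢ = 1 such that M(x) = f⁻¹( ∑_{i=1}^n ωᵢ f(xᵢ) ) for all x ∈ Eⁿ. -/
/-!
The converse direction is a computation once the generator is seen to be a homeomorphism onto its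
image. For the direct one, the interval is treated as a linear continuum `X` and the proof first
produces a symmetric mean.

*Symmetrization.* Fix `z` and indices `i ≠ j`, and put `x`, `y` at the entries `(i, j)`, `(j, i)`
of a matrix filled with `z`. Applying `M` to the rows and then to the results gives `P x y`, which
is symmetric in `x`, `y` by bisymmetry. The equation `P s s = P x y` has a unique solution
`s = S x y`. Since `M` commutes with itself and is idempotent, it commutes with `P`, hence with
`S`; this in turn makes `S` bisymmetric (`exists_symMean`).

*Generator of `S`.* For `a < b`, repeated bisection with `S` gives points indexed by the dyadic
numbers in `[0, 1]`, with `S` corresponding to the arithmetic mean of the indices (`dyad_mean`).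
Both the points and their indices are dense, because a closed set stable under a mean has no gaps
(`IsSymMean.Icc_subset_of_isClosed`). Hence the correspondence extends to a continuous strictly
increasing `f` on `(a, b)` with `f (S x y) = (f x + f y) / 2` (`exists_local`). Iterates of
`y ↦ S c y` with `a < c < b` bring any point into `(a, b)`, and each step halves `f y - f c`, so `f`
extends to all of `X` (`exists_global`).

*Linearity of `M`.* Any other continuous solution of the same mean equation is an affine function
of `f` (`exists_affine`). Applied to `s ↦ f (M (c, …, s, …, c))`, this yields the weights. As `M`
commutes with `S`, exchanging one coordinate between two points preserves the sum of the values of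
`f ∘ M`, so increments in one coordinate do not depend on the others, and
`f (M x) = f c + ∑ ωᵢ (f xᵢ - f c)` follows by changing one coordinate at a time. Idempotence gives
`∑ ωᵢ = 1`.
-/

open Set Filter Topology

set_option linter.unusedSectionVars false

namespace QuasiLinear

/-! ### Symmetric means -/

/-- A continuous, symmetric, idempotent, bisymmetric binary operation that is strictly increasing
in its second (hence, by symmetry, in each) variable. -/
structure IsSymMean {X : Type*} [LinearOrder X] [TopologicalSpace X] (S : X → X → X) : Prop where
  cont : Continuous fun p : X × X => S p.1 p.2
  symm : ∀ x y, S x y = S y x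
  idem : ∀ x, S x x = x
  mono : ∀ x, StrictMono (S x)
  bisymm : ∀ x y u v, S (S x y) (S u v) = S (S x u) (S y v)

namespace IsSymMean

section basic

variable {X : Type*} [LinearOrder X] [TopologicalSpace X] {S : X → X → X}

lemma left_lt (hS : IsSymMean S) {x y : X} (h : x < y) : x < S x y := by
  simpa [hS.idem] using hS.mono x h

lemma lt_right (hS : IsSymMean S) {x y : X} (h : x < y) : S x y < y := by
  simpa [hS.idem, hS.symm y x] using hS.mono y h

lemma mono₂ (hS : IsSymMean S) {x y u v : X} (h : x ≤ u) (h' : y ≤ v) : S x y ≤ S u v :=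
  ((hS.mono x).monotone h').trans (by
    rw [hS.symm x, hS.symm u]; exact (hS.mono v).monotone h)

lemma lt₂ (hS : IsSymMean S) {x y u v : X} (h : x < u) (h' : y < v) : S x y < S u v :=
  (hS.mono x h').trans_le (hS.mono₂ h.le le_rfl)

lemma mem_Ioo (hS : IsSymMean S) {a b x y : X} (hx : x ∈ Ioo a b) (hy : y ∈ Ioo a b) :
    S x y ∈ Ioo a b := by
  constructor
  · simpa [hS.idem] using hS.lt₂ hx.1 hy.1
  · simpa [hS.idem] using hS.lt₂ hx.2 hy.2

lemma cont_right (hS : IsSymMean S) (c : X) : Continuous (S c) :=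
  hS.cont.comp (continuous_const.prodMk continuous_id)

end basic

lemma real_mean : IsSymMean (fun s t : ℝ => (s + t) / 2) where
  cont := by fun_prop
  symm x y := by ring
  idem x := by ring
  mono x := fun s t h => by dsimp only; linarith
  bisymm x y u v := by ring

section order

variable {X : Type*} [ConditionallyCompleteLinearOrder X] [DenselyOrdered X]
  [TopologicalSpace X] [OrderTopology X] {S : X → X → X}

/-- A closed set stable under the mean has no gaps: the endpoints of a gap belong to the set, and
their mean would fall inside the gap. -/
lemma Icc_subset_of_isClosed (hS : IsSymMean S) {C : Set X} (hC : IsClosed C)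
    (hCS : ∀ x ∈ C, ∀ y ∈ C, S x y ∈ C) {a b : X} (ha : a ∈ C) (hb : b ∈ C) :
    Icc a b ⊆ C := by
  rintro w ⟨haw, hwb⟩
  by_contra hw
  have hl : sSup (C ∩ Iic w) ∈ C ∩ Iic w :=
    (hC.inter isClosed_Iic).csSup_mem ⟨a, ha, haw⟩ ⟨w, fun _ h => h.2⟩
  have hr : sInf (C ∩ Ici w) ∈ C ∩ Ici w :=
    (hC.inter isClosed_Ici).csInf_mem ⟨b, hb, hwb⟩ ⟨w, fun _ h => h.2⟩
  set x := sSup (C ∩ Iic w)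
  set y := sInf (C ∩ Ici w)
  have hxw : x < w := lt_of_le_of_ne hl.2 fun h => hw (h ▸ hl.1)
  have hwy : w < y := lt_of_le_of_ne hr.2 fun h => hw (h ▸ hr.1)
  have hxy := hxw.trans hwy
  have hm := hCS x hl.1 y hr.1
  rcases le_total (S x y) w with h | h
  · exact absurd (le_csSup ⟨w, fun _ h => h.2⟩ (⟨hm, h⟩ : S x y ∈ C ∩ Iic w))
      (not_le.2 (hS.left_lt hxy))
  · exact absurd (csInf_le ⟨w, fun _ h => h.2⟩ (⟨hm, h⟩ : S x y ∈ C ∩ Ici w))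
      (not_le.2 (hS.lt_right hxy))

lemma Icc_subset_closure (hS : IsSymMean S) {C : Set X}
    (hCS : ∀ x ∈ C, ∀ y ∈ C, S x y ∈ C) {a b : X} (ha : a ∈ C) (hb : b ∈ C) :
    Icc a b ⊆ closure C :=
  hS.Icc_subset_of_isClosed isClosed_closure
    (fun _ hx _ hy => map_mem_closure₂ hS.cont hx hy hCS)
    (subset_closure ha) (subset_closure hb)

lemma exists_mem_Ioo (hS : IsSymMean S) {C : Set X}
    (hCS : ∀ x ∈ C, ∀ y ∈ C, S x y ∈ C) {a b : X} (ha : a ∈ C) (hb : b ∈ C) {x y : X}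
    (hax : a ≤ x) (hxy : x < y) (hyb : y ≤ b) : ∃ z ∈ C, x < z ∧ z < y := by
  obtain ⟨w, hw⟩ := exists_between hxy
  have := hS.Icc_subset_closure hCS ha hb (⟨hax.trans hw.1.le, hw.2.le.trans hyb⟩ : w ∈ Icc a b)
  obtain ⟨z, hz, hzC⟩ := mem_closure_iff.1 this (Ioo x y) isOpen_Ioo hw
  exact ⟨z, hzC, hz⟩

end order

end IsSymMean

/-! ### Bisection points -/

/-- `dyad S a b k i` is the point of `[a, b]` with dyadic parameter `i / 2 ^ k` (for `i ≤ 2 ^ k`),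
obtained from `a` and `b` by repeated bisection with the mean `S`. For even `i` the two
arguments of `S` coincide. -/
def dyad {X : Type*} (S : X → X → X) (a b : X) : ℕ → ℕ → X
  | 0, i => if i = 0 then a else b
  | k + 1, i => S (dyad S a b k (i / 2)) (dyad S a b k ((i + 1) / 2))

section dyad

lemma dyad_succ {X : Type*} (S : X → X → X) (a b : X) (k i : ℕ) : dyad S a b (k + 1) i =
    S (dyad S a b k (i / 2)) (dyad S a b k ((i + 1) / 2)) := rfl

variable {X : Type*} [LinearOrder X] [TopologicalSpace X] {S : X → X → X} {a b : X}

lemma dyad_double (hS : IsSymMean S) (k i : ℕ) :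
    dyad S a b (k + 1) (2 * i) = dyad S a b k i := by
  have h1 : 2 * i / 2 = i := by omega
  have h2 : (2 * i + 1) / 2 = i := by omega
  rw [dyad, h1, h2, hS.idem]

lemma dyad_double_succ (k i : ℕ) :
    dyad S a b (k + 1) (2 * i + 1) = S (dyad S a b k i) (dyad S a b k (i + 1)) := by
  have h1 : (2 * i + 1) / 2 = i := by omega
  have h2 : (2 * i + 1 + 1) / 2 = i + 1 := by omega
  rw [dyad, h1, h2]

lemma dyad_refine (hS : IsSymMean S) (k m i : ℕ) :
    dyad S a b (k + m) (2 ^ m * i) = dyad S a b k i := by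
  induction m with
  | zero => simp
  | succ m ih =>
    rw [← ih, ← dyad_double hS (k + m)]
    congr 1
    ring

lemma dyad_lt_succ (hS : IsSymMean S) (hab : a < b) (k : ℕ) :
    ∀ i, i < 2 ^ k → dyad S a b k i < dyad S a b k (i + 1) := by
  induction k with
  | zero =>
    intro i hi
    obtain rfl : i = 0 := by simpa using hi
    simpa [dyad] using hab
  | succ k ih =>
    intro i hi
    rw [pow_succ] at hi
    rcases Nat.even_or_odd' i with ⟨m, rfl | rfl⟩
    · rw [dyad_double hS, dyad_double_succ]
      exact hS.left_lt (ih m (by omega))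
    · rw [show 2 * m + 1 + 1 = 2 * (m + 1) by ring, dyad_double hS, dyad_double_succ]
      exact hS.lt_right (ih m (by omega))

lemma dyad_lt (hS : IsSymMean S) (hab : a < b) {k i j : ℕ} (hij : i < j) (hj : j ≤ 2 ^ k) :
    dyad S a b k i < dyad S a b k j := by
  induction j, hij using Nat.le_induction with
  | base => exact dyad_lt_succ hS hab k i hj
  | succ j hij ih => exact (ih (by omega)).trans (dyad_lt_succ hS hab k j (by omega))

/-- The bisection points are additively indexed: this is where bisymmetry enters. -/
lemma dyad_mean (hS : IsSymMean S) (k : ℕ) :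
    ∀ i j, i ≤ 2 ^ k → j ≤ 2 ^ k →
      S (dyad S a b k i) (dyad S a b k j) = dyad S a b (k + 1) (i + j) := by
  induction k with
  | zero =>
    intro i j hi hj
    have hi : i ≤ 1 := by simpa using hi
    have hj : j ≤ 1 := by simpa using hj
    interval_cases i <;> interval_cases j <;> simp [dyad, hS.idem, hS.symm b a]
  | succ k ih =>
    intro i j hi hj
    rw [pow_succ] at hi hj
    have key : ∀ p q r s : ℕ, p ≤ 2 ^ k → q ≤ 2 ^ k → r ≤ 2 ^ k → s ≤ 2 ^ k →
        S (S (dyad S a b k p) (dyad S a b k q)) (S (dyad S a b k r) (dyad S a b k s)) =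
          S (dyad S a b (k + 1) (p + r)) (dyad S a b (k + 1) (q + s)) := by
      intro p q r s hp hq hr hs
      rw [hS.bisymm, ih p r hp hr, ih q s hq hs]
    rw [dyad_succ S a b (k + 1) (i + j), dyad_succ S a b k i, dyad_succ S a b k j]
    -- When both indices are odd, the halves must be matched crosswise to balance the two sums.
    rcases Nat.even_or_odd' i with ⟨m, rfl | rfl⟩ <;> rcases Nat.even_or_odd' j with ⟨l, rfl | rfl⟩
    · rw [key _ _ _ _ (by omega) (by omega) (by omega) (by omega)]
      congr 2 <;> omega
    · rw [key _ _ _ _ (by omega) (by omega) (by omega) (by omega)]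
      congr 2 <;> omega
    · rw [key _ _ _ _ (by omega) (by omega) (by omega) (by omega)]
      congr 2 <;> omega
    · rw [hS.symm (dyad S a b k ((2 * l + 1) / 2)),
        key _ _ _ _ (by omega) (by omega) (by omega) (by omega)]
      congr 2 <;> omega

/-- `Dyadic S a b x t`: the point `x` is a bisection point of `[a, b]` with parameter `t`. -/
def Dyadic (S : X → X → X) (a b x : X) (t : ℝ) : Prop :=
  ∃ k i : ℕ, i ≤ 2 ^ k ∧ dyad S a b k i = x ∧ (i : ℝ) / 2 ^ k = t

lemma dyadic_left : Dyadic S a b a 0 := ⟨0, 0, by simp, by simp [dyad], by simp⟩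

lemma dyadic_right : Dyadic S a b b 1 := ⟨0, 1, by simp, by simp [dyad], by simp⟩

lemma Dyadic.nonneg {x : X} {t : ℝ} (h : Dyadic S a b x t) : 0 ≤ t := by
  obtain ⟨k, i, -, -, rfl⟩ := h
  positivity

lemma Dyadic.le_one {x : X} {t : ℝ} (h : Dyadic S a b x t) : t ≤ 1 := by
  obtain ⟨k, i, hi, -, rfl⟩ := h
  rw [div_le_one (by positivity)]
  exact_mod_cast hi

lemma Dyadic.common (hS : IsSymMean S) {x y : X} {t u : ℝ} (hx : Dyadic S a b x t)
    (hy : Dyadic S a b y u) : ∃ k i j : ℕ, i ≤ 2 ^ k ∧ j ≤ 2 ^ k ∧ dyad S a b k i = x ∧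
      dyad S a b k j = y ∧ (i : ℝ) / 2 ^ k = t ∧ (j : ℝ) / 2 ^ k = u := by
  obtain ⟨k, i, hi, rfl, rfl⟩ := hx
  obtain ⟨l, j, hj, rfl, rfl⟩ := hy
  refine ⟨k + l, 2 ^ l * i, 2 ^ k * j, ?_, ?_, dyad_refine hS _ _ _, ?_, ?_, ?_⟩
  · rw [pow_add, mul_comm]; gcongr
  · rw [pow_add]; gcongr
  · rw [add_comm k l]; exact dyad_refine hS _ _ _
  · push_cast; rw [pow_add]; field_simp
  · push_cast; rw [pow_add]; field_simp

lemma Dyadic.mean (hS : IsSymMean S) {x y : X} {t u : ℝ} (hx : Dyadic S a b x t)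
    (hy : Dyadic S a b y u) : Dyadic S a b (S x y) ((t + u) / 2) := by
  obtain ⟨k, i, j, hi, hj, rfl, rfl, rfl, rfl⟩ := hx.common hS hy
  refine ⟨k + 1, i + j, by rw [pow_succ]; omega, (dyad_mean hS k i j hi hj).symm, ?_⟩
  push_cast
  rw [pow_succ]
  field_simp

lemma Dyadic.lt_iff (hS : IsSymMean S) (hab : a < b) {x y : X} {t u : ℝ}
    (hx : Dyadic S a b x t) (hy : Dyadic S a b y u) : x < y ↔ t < u := by
  obtain ⟨k, i, j, hi, hj, rfl, rfl, rfl, rfl⟩ := hx.common hS hy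
  rw [div_lt_div_iff_of_pos_right (by positivity), Nat.cast_lt]
  refine ⟨fun h => ?_, fun h => dyad_lt hS hab h hj⟩
  by_contra! hji
  rcases hji.eq_or_lt with rfl | hji
  · exact lt_irrefl _ h
  · exact lt_asymm h (dyad_lt hS hab hji hi)

lemma Dyadic.exists_monotone (hS : IsSymMean S) (hab : a < b) :
    ∃ f : X → ℝ, Monotone f ∧ ∀ x t, Dyadic S a b x t → f x = t := by
  have bdd : ∀ x, BddAbove {t : ℝ | t = 0 ∨ ∃ y ≤ x, Dyadic S a b y t} := by
    rintro x
    refine ⟨1, ?_⟩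
    rintro t (rfl | ⟨y, -, hy⟩)
    · exact zero_le_one
    · exact hy.le_one
  -- The value `0` keeps the set nonempty to the left of `a`.
  refine ⟨fun x => sSup {t : ℝ | t = 0 ∨ ∃ y ≤ x, Dyadic S a b y t}, fun x x' h => ?_,
    fun x t hx => ?_⟩
  · refine csSup_le_csSup (bdd x') ⟨0, Or.inl rfl⟩ ?_
    rintro t (rfl | ⟨y, hyx, hy⟩)
    · exact Or.inl rfl
    · exact Or.inr ⟨y, hyx.trans h, hy⟩
  · refine IsGreatest.csSup_eq ⟨Or.inr ⟨x, le_rfl, hx⟩, ?_⟩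
    rintro s (rfl | ⟨y, hyx, hy⟩)
    · exact hx.nonneg
    · by_contra! h
      exact absurd ((Dyadic.lt_iff hS hab hx hy).2 h) (not_lt.2 hyx)

end dyad

/-! ### The generator of a symmetric mean -/

section extension

variable {X : Type*} [ConditionallyCompleteLinearOrder X] [DenselyOrdered X]
  [TopologicalSpace X] [OrderTopology X] {S : X → X → X}

/-- Additive representation of a symmetric mean between two given points. -/
lemma exists_local (hS : IsSymMean S) {a b : X} (hab : a < b) :
    ∃ f : X → ℝ, StrictMonoOn f (Icc a b) ∧ (∀ x ∈ Ioo a b, ContinuousAt f x) ∧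
      ∀ x ∈ Ioo a b, ∀ y ∈ Ioo a b, f (S x y) = (f x + f y) / 2 := by
  obtain ⟨f, hf, hfD⟩ := Dyadic.exists_monotone hS hab
  have hdom : ∀ x y, a ≤ x → x < y → y ≤ b → ∃ z t, Dyadic S a b z t ∧ x < z ∧ z < y := by
    intro x y hax hxy hyb
    obtain ⟨z, ⟨t, hz⟩, hzz⟩ := hS.exists_mem_Ioo (C := {x | ∃ t, Dyadic S a b x t})
      (fun _ ⟨_, h⟩ _ ⟨_, h'⟩ => ⟨_, h.mean hS h'⟩) ⟨0, dyadic_left⟩ ⟨1, dyadic_right⟩ hax hxy hyb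
    exact ⟨z, t, hz, hzz⟩
  have hranS : ∀ s ∈ {t | ∃ x, Dyadic S a b x t}, ∀ t ∈ {t | ∃ x, Dyadic S a b x t},
      (s + t) / 2 ∈ {t | ∃ x, Dyadic S a b x t} :=
    fun _ ⟨_, h⟩ _ ⟨_, h'⟩ => ⟨_, h.mean hS h'⟩
  have hran : ∀ s t : ℝ, 0 ≤ s → s < t → t ≤ 1 → ∃ z u, Dyadic S a b z u ∧ s < u ∧ u < t := by
    intro s t hs hst ht
    obtain ⟨u, ⟨z, hz⟩, hzz⟩ := IsSymMean.real_mean.exists_mem_Ioo hranS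
      ⟨a, dyadic_left⟩ ⟨b, dyadic_right⟩ hs hst ht
    exact ⟨z, u, hz, hzz⟩
  have hmono : StrictMonoOn f (Icc a b) := by
    intro x hx y hy hxy
    obtain ⟨z, t, hz, hxz, hzy⟩ := hdom x y hx.1 hxy hy.2
    obtain ⟨w, u, hw, hzw, hwy⟩ := hdom z y (hx.1.trans hxz.le) hzy hy.2
    calc f x ≤ f z := hf hxz.le
      _ = t := hfD _ _ hz
      _ < u := (Dyadic.lt_iff hS hab hz hw).1 hzw
      _ = f w := (hfD _ _ hw).symm
      _ ≤ f y := hf hwy.le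
  have hfa : f a = 0 := hfD _ _ dyadic_left
  have hfb : f b = 1 := hfD _ _ dyadic_right
  have hpos : ∀ x ∈ Ioo a b, 0 < f x ∧ f x < 1 := by
    intro x hx
    constructor
    · rw [← hfa]; exact hmono (left_mem_Icc.2 hab.le) (Ioo_subset_Icc_self hx) hx.1
    · rw [← hfb]; exact hmono (Ioo_subset_Icc_self hx) (right_mem_Icc.2 hab.le) hx.2
  refine ⟨f, hmono, fun x hx => ?_, fun x hx y hy => ?_⟩
  · refine continuousAt_of_monotoneOn_of_closure_image_mem_nhds (s := Icc a b) (hf.monotoneOn _)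
      (Icc_mem_nhds hx.1 hx.2) (mem_of_superset (Icc_mem_nhds (hpos x hx).1 (hpos x hx).2) ?_)
    refine (IsSymMean.real_mean.Icc_subset_closure hranS
      ⟨a, dyadic_left⟩ ⟨b, dyadic_right⟩).trans (closure_mono ?_)
    rintro t ⟨z, hz⟩
    refine ⟨z, ⟨?_, ?_⟩, hfD _ _ hz⟩
    · by_contra! h
      exact absurd hz.nonneg (not_le.2 ((Dyadic.lt_iff hS hab hz dyadic_left).1 h))
    · by_contra! h
      exact absurd hz.le_one (not_le.2 ((Dyadic.lt_iff hS hab dyadic_right hz).1 h))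
  · -- Squeeze `x` and `y` between bisection points with parameters close to `f x` and `f y`.
    apply le_antisymm
    · refine le_of_forall_pos_le_add fun ε hε => ?_
      obtain ⟨z, t, hz, h1, h2⟩ := hran (f x) (min (f x + ε) 1) (hpos x hx).1.le
        (lt_min (by linarith) (hpos x hx).2) (min_le_right _ _)
      obtain ⟨w, u, hw, h3, h4⟩ := hran (f y) (min (f y + ε) 1) (hpos y hy).1.le
        (lt_min (by linarith) (hpos y hy).2) (min_le_right _ _)
      have hxz : x < z := hf.reflect_lt (by rwa [hfD _ _ hz])
      have hyw : y < w := hf.reflect_lt (by rwa [hfD _ _ hw])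
      have h5 := hf (hS.mono₂ hxz.le hyw.le)
      rw [hfD _ _ (hz.mean hS hw)] at h5
      have h6 := min_le_left (f x + ε) 1
      have h7 := min_le_left (f y + ε) 1
      linarith
    · refine le_of_forall_pos_le_add fun ε hε => ?_
      obtain ⟨z, t, hz, h1, h2⟩ := hran (max (f x - ε) 0) (f x) (le_max_right _ _)
        (max_lt (by linarith) (hpos x hx).1) (hpos x hx).2.le
      obtain ⟨w, u, hw, h3, h4⟩ := hran (max (f y - ε) 0) (f y) (le_max_right _ _)
        (max_lt (by linarith) (hpos y hy).1) (hpos y hy).2.le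
      have hxz : z < x := hf.reflect_lt (by rwa [hfD _ _ hz])
      have hyw : w < y := hf.reflect_lt (by rwa [hfD _ _ hw])
      have h5 := hf (hS.mono₂ hxz.le hyw.le)
      rw [hfD _ _ (hz.mean hS hw)] at h5
      have h6 := le_max_left (f x - ε) 0
      have h7 := le_max_left (f y - ε) 0
      linarith

/-- Iterating the contraction `S c` brings every point close to `c`. -/
lemma exists_iterate_mem (hS : IsSymMean S) {a b c : X} (hac : a < c) (hcb : c < b) (x : X) :
    ∃ k : ℕ, (S c)^[k] x ∈ Ioo a b := by
  have hcont : ∀ k, Continuous (S c)^[k] := fun k => (hS.cont_right c).iterate k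
  have hmono : ∀ k, StrictMono (S c)^[k] := fun k => (hS.mono c).iterate k
  have hfix : ∀ k, (S c)^[k] c = c := fun k => Function.iterate_fixed (hS.idem c) k
  -- The set of points attracted into `(a, b)` is open, and it is closed since `S c y` lies
  -- strictly between `c` and `y`.
  set U : Set X := {x | ∃ k : ℕ, (S c)^[k] x ∈ Ioo a b}
  have hU : IsOpen U := by
    have : U = ⋃ k, (S c)^[k] ⁻¹' Ioo a b := by ext; simp [U]
    rw [this]
    exact isOpen_iUnion fun k => isOpen_Ioo.preimage (hcont k)
  have hcU : c ∈ U := ⟨0, hac, hcb⟩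
  have hstep : ∀ y, S c y ∈ U → y ∈ U := by
    rintro y ⟨k, hk⟩
    exact ⟨k + 1, by rwa [Function.iterate_succ_apply]⟩
  have hU' : IsClosed U := by
    refine isClosed_of_closure_subset fun y hy => ?_
    rcases lt_trichotomy y c with h | rfl | h
    · obtain ⟨u, hu, k, hk⟩ := mem_closure_iff.1 hy (Iio (S c y)) isOpen_Iio
        (by rw [mem_Iio, hS.symm]; exact hS.left_lt h)
      refine hstep y ⟨k, hk.1.trans (hmono k hu), lt_of_le_of_lt ?_ hcb⟩
      calc (S c)^[k] (S c y) ≤ (S c)^[k] c := (hmono k).monotone (by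
            rw [hS.symm]; exact (hS.lt_right h).le)
        _ = c := hfix k
    · exact hcU
    · obtain ⟨u, hu, k, hk⟩ := mem_closure_iff.1 hy (Ioi (S c y)) isOpen_Ioi
        (hS.lt_right h)
      refine hstep y ⟨k, lt_of_lt_of_le hac ?_, (hmono k hu).trans hk.2⟩
      calc c = (S c)^[k] c := (hfix k).symm
        _ ≤ (S c)^[k] (S c y) := (hmono k).monotone (hS.left_lt h).le
  have : U = univ := IsClopen.eq_univ ⟨hU', hU⟩ ⟨c, hcU⟩
  exact (this ▸ mem_univ x : x ∈ U)

/-- Additive representation of a symmetric mean on the whole space: the local representation is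
transported along the contraction `S c`, which halves distances to `f c`. -/
lemma exists_global [Nontrivial X] (hS : IsSymMean S) :
    ∃ f : X → ℝ, Continuous f ∧ StrictMono f ∧ ∀ x y, f (S x y) = (f x + f y) / 2 := by
  obtain ⟨a, b, hab⟩ := exists_pair_lt X
  obtain ⟨c, hac, hcb⟩ := exists_between hab
  obtain ⟨f₀, hmono, hcont, hmean⟩ := exists_local hS hab
  have hc : c ∈ Ioo a b := ⟨hac, hcb⟩
  have hit : ∀ k x y, (S c)^[k] (S x y) = S ((S c)^[k] x) ((S c)^[k] y) := by
    intro k x y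
    induction k with
    | zero => rfl
    | succ k ih =>
      rw [Function.iterate_succ_apply', Function.iterate_succ_apply', Function.iterate_succ_apply',
        ih, ← hS.bisymm, hS.idem]
  set F : ℕ → X → ℝ := fun k x => f₀ c + 2 ^ k * (f₀ ((S c)^[k] x) - f₀ c) with hF
  have hFle : ∀ k l x, k ≤ l → (S c)^[k] x ∈ Ioo a b →
      (S c)^[l] x ∈ Ioo a b ∧ F l x = F k x := by
    intro k l x hkl hk
    induction l, hkl using Nat.le_induction with
    | base => exact ⟨hk, rfl⟩
    | succ l hkl ih =>
      refine ⟨?_, ?_⟩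
      · rw [Function.iterate_succ_apply']
        exact hS.mem_Ioo hc ih.1
      · rw [← ih.2, hF]
        dsimp only
        rw [Function.iterate_succ_apply', hmean c hc _ ih.1]
        ring
  choose k hk using exists_iterate_mem hS hac hcb
  have hfF : ∀ l x, (S c)^[l] x ∈ Ioo a b → F (k x) x = F l x := fun l x hl => by
    rw [← (hFle l (max l (k x)) x (le_max_left _ _) hl).2,
      ← (hFle (k x) (max l (k x)) x (le_max_right _ _) (hk x)).2]
  refine ⟨fun x => F (k x) x, ?_, ?_, ?_⟩
  · refine continuous_iff_continuousAt.2 fun x => ?_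
    have hck : ContinuousAt (S c)^[k x] x := ((hS.cont_right c).iterate (k x)).continuousAt
    have hFc : ContinuousAt (F (k x)) x :=
      continuousAt_const.add (continuousAt_const.mul
        (((hcont _ (hk x)).comp hck).sub continuousAt_const))
    refine hFc.congr ?_
    filter_upwards [hck.eventually_mem (isOpen_Ioo.mem_nhds (hk x))] with y hy
    exact (hfF _ _ hy).symm
  · intro x y hxy
    have hx := (hFle _ (max (k x) (k y)) x (le_max_left _ _) (hk x)).1
    have hy := (hFle _ (max (k x) (k y)) y (le_max_right _ _) (hk y)).1
    dsimp only
    rw [hfF _ _ hx, hfF _ _ hy, hF]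
    have := hmono (Ioo_subset_Icc_self hx) (Ioo_subset_Icc_self hy)
      ((hS.mono c).iterate (max (k x) (k y)) hxy)
    dsimp only
    gcongr
  · intro x y
    have hx := (hFle _ (max (k x) (k y)) x (le_max_left _ _) (hk x)).1
    have hy := (hFle _ (max (k x) (k y)) y (le_max_right _ _) (hk y)).1
    have hxy : (S c)^[max (k x) (k y)] (S x y) ∈ Ioo a b := by
      rw [hit]
      exact hS.mem_Ioo hx hy
    dsimp only
    rw [hfF _ _ hx, hfF _ _ hy, hfF _ _ hxy, hF]
    dsimp only
    rw [hit, hmean _ hx _ hy]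
    ring

/-- Uniqueness of the additive representation up to an affine change of scale. -/
lemma exists_affine [Nontrivial X] (hS : IsSymMean S) {f g : X → ℝ} (hf : Continuous f)
    (hfm : StrictMono f) (hfS : ∀ x y, f (S x y) = (f x + f y) / 2) (hg : Continuous g)
    (hgS : ∀ x y, g (S x y) = (g x + g y) / 2) :
    ∃ w : ℝ, ∀ x y, g x - g y = w * (f x - f y) := by
  have hloc : ∀ u v : X, u < v → ∃ w : ℝ, ∀ x ∈ Icc u v, g x - g u = w * (f x - f u) := by
    intro u v huv
    have hne : f v - f u ≠ 0 := (sub_pos.2 (hfm huv)).ne'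
    refine ⟨(g v - g u) / (f v - f u), fun x hx => ?_⟩
    refine hS.Icc_subset_of_isClosed
      (C := {x | g x - g u = (g v - g u) / (f v - f u) * (f x - f u)})
      (isClosed_eq (by fun_prop) (by fun_prop)) ?_ (by simp) ?_ hx
    · intro y hy z hz
      simp only [mem_ofPred_eq] at hy hz ⊢
      rw [hgS, hfS]
      linear_combination (hy + hz) / 2
    · simp only [mem_ofPred_eq]
      field_simp
  obtain ⟨p, q, hpq⟩ := exists_pair_lt X
  have hne : f q - f p ≠ 0 := sub_ne_zero.2 (hfm.injective.ne (ne_of_gt hpq))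
  -- The slope on any interval containing `p` and `q` is determined by the values there.
  have hp : ∀ x, g x - g p = (g q - g p) / (f q - f p) * (f x - f p) := by
    intro x
    obtain ⟨w, hw⟩ := hloc (min p x) (max q x)
      ((min_le_left _ _).trans_lt (hpq.trans_le (le_max_left _ _)))
    have h1 := hw p ⟨min_le_left _ _, hpq.le.trans (le_max_left _ _)⟩
    have h2 := hw q ⟨(min_le_left _ _).trans hpq.le, le_max_left _ _⟩
    have h3 := hw x ⟨min_le_right _ _, le_max_right _ _⟩
    have hwq : w = (g q - g p) / (f q - f p) := by
      rw [eq_div_iff hne]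
      linear_combination h1 - h2
    rw [← hwq]
    linear_combination h3 - h1
  exact ⟨(g q - g p) / (f q - f p), fun x y => by linear_combination hp x - hp y⟩

end extension

/-! ### Symmetrization and linearity -/

section symmetrization

variable {X : Type*} [ConditionallyCompleteLinearOrder X] [DenselyOrdered X]
  [TopologicalSpace X] [OrderTopology X] {ι : Type*} [Fintype ι] [DecidableEq ι]
  {M : (ι → X) → X}

lemma strictMono_of_update (hM : ∀ i x, StrictMono fun t => M (Function.update x i t)) :
    StrictMono M := by
  have hmono : Monotone M := by
    intro x y hxy
    have : ∀ s : Finset ι, M x ≤ M (s.piecewise y x) := by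
      intro s
      induction s using Finset.induction_on with
      | empty => simp
      | insert j s hj ih =>
        rw [Finset.piecewise_insert]
        refine ih.trans ?_
        conv_lhs => rw [← Function.update_eq_self j (s.piecewise y x)]
        refine (hM j _).monotone ?_
        rw [Finset.piecewise_eq_of_notMem _ _ _ hj]
        exact hxy j
    simpa using this Finset.univ
  intro x y hxy
  obtain ⟨hle, i, hi⟩ := Pi.lt_def.1 hxy
  calc M x = M (Function.update x i (x i)) := by simp
    _ < M (Function.update x i (y i)) := hM i x hi
    _ ≤ M y := hmono (by
      intro j
      rcases eq_or_ne j i with rfl | h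
      · simp
      · simpa [h] using hle j)

/-- The matrix with entries `x` at `(i, j)`, `y` at `(j, i)` and `z` elsewhere. -/
def mat (i j : ι) (z x y : X) : ι → ι → X := fun k l =>
  if k = i ∧ l = j then x else if k = j ∧ l = i then y else z

/-- Bisymmetry makes the two off-diagonal slots of `mat` interchangeable, so that
`P x y = M (M ∘ mat i j z x y)` is symmetric. The equation `P s s = P x y` then defines a
symmetric mean `s = S x y`, and it commutes with `M` because `M` commutes with itself. -/
lemma exists_symMean (hcont : Continuous M)
    (hM : ∀ i x, StrictMono fun t => M (Function.update x i t)) (hidem : ∀ c, M (fun _ => c) = c)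
    (hbis : ∀ x : ι → ι → X, M (fun i => M (x i)) = M fun j => M fun i => x i j)
    {i j : ι} (hij : i ≠ j) [Nonempty X] :
    ∃ S : X → X → X, IsSymMean S ∧
      ∀ x y : ι → X, M (fun k => S (x k) (y k)) = S (M x) (M y) := by
  obtain ⟨z⟩ := ‹Nonempty X›
  have hMm := strictMono_of_update hM
  set P : X → X → X := fun x y => M fun k => M (mat i j z x y k) with hP
  have hPsymm : ∀ x y, P x y = P y x := by
    intro x y
    rw [hP]
    dsimp only
    rw [hbis]
    congr! 4 with k l
    unfold mat
    grind
  have hPmono : ∀ x, StrictMono (P x) := by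
    intro x y y' h
    refine hMm (Pi.lt_def.2 ⟨fun k => hMm.monotone fun l => ?_, j, hMm (Pi.lt_def.2
      ⟨fun l => ?_, i, ?_⟩)⟩)
    · unfold mat; grind
    · unfold mat; grind
    · unfold mat; grind
  have hPcont : Continuous fun p : X × X => P p.1 p.2 := by
    refine hcont.comp (continuous_pi fun k => hcont.comp (continuous_pi fun l => ?_))
    unfold mat
    split_ifs <;> fun_prop
  have hPM : ∀ x y : ι → X, M (fun k => P (x k) (y k)) = P (M x) (M y) := by
    intro x y
    rw [hP]
    dsimp only
    rw [hbis]
    congr! 2 with k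
    rw [hbis]
    congr! 2 with l
    unfold mat
    split_ifs
    · rfl
    · rfl
    · exact hidem z
  have hgm : StrictMono fun s => P s s := fun s t h =>
    (hPmono s h).trans (by rw [hPsymm s]; exact hPmono t h)
  have hgc : Continuous fun s => P s s := hPcont.comp (continuous_id.prodMk continuous_id)
  have hex : ∀ x y, ∃ s, P s s = P x y := by
    intro x y
    have hPle : ∀ {a b c d}, a ≤ c → b ≤ d → P a b ≤ P c d := fun {a b c d} h h' =>
      ((hPmono a).monotone h').trans (by
        rw [hPsymm a, hPsymm c]; exact (hPmono d).monotone h)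
    exact mem_range_of_exists_le_of_exists_ge hgc
      ⟨min x y, hPle (min_le_left _ _) (min_le_right _ _)⟩
      ⟨max x y, hPle (le_max_left _ _) (le_max_right _ _)⟩
  choose S hS using hex
  have hinj : ∀ {s t}, P s s = P t t → s = t := fun h => hgm.injective h
  have hSM : ∀ x y : ι → X, M (fun k => S (x k) (y k)) = S (M x) (M y) := by
    intro x y
    apply hinj
    rw [hS, ← hPM, ← hPM]
    simp only [hS]
  have hSi : ∀ x, S x x = x := fun x => hinj (hS x x)
  have hSP : ∀ x y u v, S (P x y) (P u v) = P (S x u) (S y v) := by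
    intro x y u v
    rw [hP]
    dsimp only
    rw [← hSM]
    congr! 2 with k
    rw [← hSM]
    congr! 2 with l
    unfold mat
    split_ifs
    · rfl
    · rfl
    · exact hSi z
  refine ⟨S, ⟨?_, ?_, hSi, ?_, ?_⟩, hSM⟩
  · have hemb : IsEmbedding fun s => P s s :=
      hgm.isEmbedding_of_ordConnected (isPreconnected_range hgc).ordConnected
    rw [hemb.continuous_iff]
    simpa [Function.comp_def, hS] using hPcont
  · intro x y
    exact hinj (by rw [hS, hS, hPsymm])
  · intro x y y' h
    rw [← hgm.lt_iff_lt]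
    simpa only [hS] using hPmono x h
  · intro x y u v
    apply hinj
    rw [hS, ← hSP, ← hS x u, ← hS y v, hSP]

/-- The representation theorem on a linear continuum. -/
theorem exists_quasiLinear [Nontrivial X] (hcont : Continuous M)
    (hM : ∀ i x, StrictMono fun t => M (Function.update x i t)) (hidem : ∀ c, M (fun _ => c) = c)
    (hbis : ∀ x : ι → ι → X, M (fun i => M (x i)) = M fun j => M fun i => x i j)
    [Nontrivial ι] :
    ∃ (f : X → ℝ) (ω : ι → ℝ), Continuous f ∧ StrictMono f ∧ (∀ i, 0 < ω i) ∧ ∑ i, ω i = 1 ∧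
      ∀ x, f (M x) = ∑ i, ω i * f (x i) := by
  obtain ⟨i₀, j₀, hij⟩ := exists_pair_ne ι
  obtain ⟨S, hS, hSM⟩ := exists_symMean hcont hM hidem hbis hij
  obtain ⟨f, hf, hfm, hfS⟩ := exists_global hS
  obtain ⟨c, d, hcd⟩ := exists_pair_lt X
  -- Dependence on a single coordinate, the other coordinates being frozen at `c`.
  have hδ : ∀ i, ∃ w : ℝ, ∀ s t, f (M (Function.update (fun _ => c) i s)) -
      f (M (Function.update (fun _ => c) i t)) = w * (f s - f t) := by
    intro i
    refine exists_affine hS (g := fun s => f (M (Function.update (fun _ => c) i s))) hf hfm hfS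
      (by fun_prop) fun s t => ?_
    rw [← hfS, ← hSM]
    congr 2
    ext k
    rcases eq_or_ne k i with rfl | h
    · simp
    · simp [h, hS.idem]
  choose ω hω using hδ
  -- Exchanging the `i`-th coordinates of two points does not change the mean of their images.
  have hpar : ∀ i (u : ι → X) s t, f (M (Function.update u i s)) - f (M (Function.update u i t)) =
      ω i * (f s - f t) := by
    intro i u s t
    rw [← hω i s t]
    have h : S (M (Function.update u i s)) (M (Function.update (fun _ => c) i t)) =
        S (M (Function.update u i t)) (M (Function.update (fun _ => c) i s)) := by
      rw [← hSM, ← hSM]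
      congr 1
      ext k
      rcases eq_or_ne k i with rfl | h
      · simp [hS.symm]
      · simp [h]
    have h' := congrArg f h
    rw [hfS, hfS] at h'
    linarith
  have hsum : ∀ x : ι → X, f (M x) = f c + ∑ i, ω i * (f (x i) - f c) := by
    intro x
    have : ∀ s : Finset ι, f (M (s.piecewise x fun _ => c)) =
        f c + ∑ i ∈ s, ω i * (f (x i) - f c) := by
      intro s
      induction s using Finset.induction_on with
      | empty => simp [hidem]
      | insert j s hj ih =>
        rw [Finset.piecewise_insert, Finset.sum_insert hj]
        have h := hpar j (s.piecewise x fun _ => c) (x j) c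
        have h' : Function.update (s.piecewise x fun _ => c) j c = s.piecewise x fun _ => c := by
          rw [Function.update_eq_self_iff, Finset.piecewise_eq_of_notMem _ _ _ hj]
        rw [h', ih] at h
        linarith
    simpa using this Finset.univ
  have hcd' : 0 < f d - f c := sub_pos.2 (hfm hcd)
  have hone : ∑ i, ω i = 1 := by
    have h := hsum fun _ => d
    rw [hidem, ← Finset.sum_mul] at h
    exact mul_right_cancel₀ hcd'.ne' (by linarith)
  refine ⟨f, ω, hf, hfm, fun i => ?_, hone, fun x => ?_⟩
  · have h := hfm (hM i (fun _ => c) hcd)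
    rw [← sub_pos, hω] at h
    exact pos_of_mul_pos_left h hcd'.le
  · rw [hsum]
    simp only [mul_sub, Finset.sum_sub_distrib, ← Finset.sum_mul, hone]
    ring

end symmetrization

/-! ### Quasi-linear means -/

section converse

variable {X : Type*} [LinearOrder X] [TopologicalSpace X] [OrderTopology X] [PreconnectedSpace X]
  {ι : Type*} [Fintype ι] [DecidableEq ι]

lemma properties_of_quasiLinear {M : (ι → X) → X} {f : X → ℝ} {ω : ι → ℝ} (hf : Continuous f)
    (hfm : StrictMono f) (hω : ∀ i, 0 < ω i) (hone : ∑ i, ω i = 1)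
    (hfM : ∀ x, f (M x) = ∑ i, ω i * f (x i)) :
    Continuous M ∧ (∀ i x, StrictMono fun t => M (Function.update x i t)) ∧
      (∀ c, M (fun _ => c) = c) ∧
      ∀ x : ι → ι → X, M (fun i => M (x i)) = M fun j => M fun i => x i j := by
  refine ⟨?_, fun i x s t hst => ?_, fun c => hfm.injective ?_, fun x => hfm.injective ?_⟩
  · have hemb : IsEmbedding f :=
      hfm.isEmbedding_of_ordConnected (isPreconnected_range hf).ordConnected
    rw [hemb.continuous_iff, Function.comp_def]
    simp only [hfM]
    fun_prop
  · rw [← hfm.lt_iff_lt]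
    simp only [hfM]
    refine Finset.sum_lt_sum (fun k _ => ?_) ⟨i, Finset.mem_univ i, ?_⟩
    · refine mul_le_mul_of_nonneg_left (hfm.monotone ?_) (hω k).le
      rcases eq_or_ne k i with rfl | h
      · simpa using hst.le
      · simp [h]
    · simpa using mul_lt_mul_of_pos_left (hfm hst) (hω i)
  · rw [hfM, ← Finset.sum_mul, hone, one_mul]
  · simp only [hfM, Finset.mul_sum]
    rw [Finset.sum_comm]
    exact Finset.sum_congr rfl fun _ _ => Finset.sum_congr rfl fun _ _ => by ring

end converse

end QuasiLinear

/-- **Aczél's theorem without symmetry (quasi-linear means).**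
Let `E` be a real interval with nonempty interior and `n ≥ 2`. A function `M : Eⁿ → E`
is continuous, strictly increasing in each variable, idempotent, and bisymmetric iff
there are a continuous strictly monotonic `f : E → ℝ` and weights `ωᵢ > 0`, `∑ ωᵢ = 1`,
with `M(x) = f⁻¹(∑ ωᵢ f(xᵢ))` (stated via `f (M x) = ∑ ωᵢ f (x i)`). -/
theorem quasiLinear_mean_characterization
    (E : Set ℝ) (hE : E.OrdConnected) (hEint : (interior E).Nonempty)
    (n : ℕ) (hn : 2 ≤ n) (M : (Fin n → ℝ) → ℝ)
    (hMmaps : ∀ x : Fin n → ℝ, (∀ i, x i ∈ E) → M x ∈ E) :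
    (ContinuousOn M {x : Fin n → ℝ | ∀ i, x i ∈ E} ∧
     (∀ (i : Fin n) (x : Fin n → ℝ), (∀ j, x j ∈ E) →
        StrictMonoOn (fun t => M (Function.update x i t)) E) ∧
     (∀ c ∈ E, M (fun _ => c) = c) ∧
     (∀ x : Fin n → Fin n → ℝ, (∀ i j, x i j ∈ E) →
        M (fun i => M (x i)) = M (fun j => M (fun i => x i j)))) ↔
    (∃ (f : ℝ → ℝ) (ω : Fin n → ℝ), ContinuousOn f E ∧
       (StrictMonoOn f E ∨ StrictAntiOn f E) ∧
       (∀ i, 0 < ω i) ∧ (∑ i, ω i) = 1 ∧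
       ∀ x : Fin n → ℝ, (∀ i, x i ∈ E) →
         f (M x) = ∑ i, ω i * f (x i)) := by
  classical
  have hpre : IsPreconnected E := hE.isPreconnected
  have : PreconnectedSpace E := Subtype.preconnectedSpace hpre
  set M' : (Fin n → E) → E := fun x => ⟨M fun i => x i, hMmaps _ fun i => (x i).2⟩ with hM'
  have hupd : ∀ (x : Fin n → E) (i : Fin n) (t : E),
      (fun j => (Function.update x i t j : ℝ)) = Function.update (fun j => (x j : ℝ)) i t := by
    intro x i t
    ext j
    rcases eq_or_ne j i with rfl | h
    · simp
    · simp [h]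
  constructor
  · rintro ⟨hcont, hmono, hidem, hbis⟩
    obtain ⟨p, hp⟩ := hEint
    have : Nonempty E := ⟨⟨p, interior_subset hp⟩⟩
    have : Inhabited E := ⟨⟨p, interior_subset hp⟩⟩
    have : Nontrivial E := nontrivial_coe_sort.2
      (infinite_of_mem_nhds p (mem_interior_iff_mem_nhds.1 hp)).nontrivial
    have : OrdConnected E := hE
    have : Nontrivial (Fin n) := Fin.nontrivial_iff_two_le.2 hn
    have hc' : Continuous M' := Continuous.subtype_mk
      (hcont.comp_continuous (by fun_prop) fun x i => (x i).2) _
    obtain ⟨f, ω, hf, hfm, hω, hone, hfM⟩ := QuasiLinear.exists_quasiLinear (M := M') hc'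
      (fun i x s t hst => by
        have := hmono i (fun j => x j) (fun j => (x j).2) s.2 t.2 hst
        rw [← Subtype.coe_lt_coe]
        simpa only [hM', hupd] using this)
      (fun c => Subtype.ext (hidem c c.2))
      (fun x => Subtype.ext (hbis (fun i j => x i j) fun i j => (x i j).2))
    have hext : ∀ x : E, Function.extend Subtype.val f 0 x = f x :=
      Subtype.val_injective.extend_apply f 0
    refine ⟨Function.extend Subtype.val f 0, ω, ?_, Or.inl fun x hx y hy hxy => ?_, hω, hone,
      fun x hx => ?_⟩
    · rw [continuousOn_iff_continuous_domRestrict]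
      exact hf.congr fun x => (hext x).symm
    · rw [hext ⟨x, hx⟩, hext ⟨y, hy⟩]
      exact hfm hxy
    · have h := hfM fun i => ⟨x i, hx i⟩
      simp only [← hext] at h
      exact h
  · rintro ⟨f, ω, hf, hfm, hω, hone, hfM⟩
    -- A decreasing generator may be replaced by its negative.
    obtain ⟨g, hg, hgm, hgM⟩ : ∃ g : E → ℝ, Continuous g ∧ StrictMono g ∧
        ∀ x, g (M' x) = ∑ i, ω i * g (x i) := by
      have hfr : Continuous fun x : E => f x := continuousOn_iff_continuous_domRestrict.1 hf
      rcases hfm with hfm | hfm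
      · exact ⟨fun x => f x, hfr, fun x y h => hfm x.2 y.2 h, fun x => hfM _ fun i => (x i).2⟩
      · refine ⟨fun x => -f x, hfr.neg, fun x y h => neg_lt_neg (hfm x.2 y.2 h), fun x => ?_⟩
        rw [hM']
        dsimp only
        rw [hfM _ fun i => (x i).2]
        simp
    obtain ⟨hcont, hmono, hidem, hbis⟩ :=
      QuasiLinear.properties_of_quasiLinear hg hgm hω hone hgM
    refine ⟨?_, fun i x hx s hs t ht hst => ?_, fun c hc => ?_, fun x hx => ?_⟩
    · rw [continuousOn_iff_continuous_domRestrict]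
      have h : Continuous fun x : {x : Fin n → ℝ | ∀ i, x i ∈ E} =>
          (M' fun i => ⟨x.1 i, x.2 i⟩ : ℝ) :=
        continuous_subtype_val.comp (hcont.comp (continuous_pi fun i =>
          Continuous.subtype_mk ((continuous_apply i).comp continuous_subtype_val) _))
      exact h
    · have h := hmono i (fun j => ⟨x j, hx j⟩)
        (show (⟨s, hs⟩ : E) < ⟨t, ht⟩ from hst)
      rw [← Subtype.coe_lt_coe] at h
      simpa only [hM', hupd] using h
    · exact congrArg Subtype.val (hidem ⟨c, hc⟩)
    · exact congrArg Subtype.val (hbis fun i j => ⟨x i j, hx i j⟩)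
end
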